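/- arXiv:2206.06889 — 3 statements merged into one kernel-verified Lean document; each statement's English description precedes it below -/
import Mathlib

section
/- Let ℓ ≥ 1. Every d ∈ ℤ^(ℤ/ℓℤ) can be written in the form d = Res_ℓ(ν) + n·δ_ℓ with ν an ℓ-core and n ∈ ℤ, and this presentation is unique: if Res_ℓ(ν) + n·δ_ℓ = Res_ℓ(ν′) + n′·δ_ℓ with ν, ν′ ℓ-cores and n, n′ ∈ ℤ, then ν = ν′ and n = n′. -/
namespace CM

/-- The `∞`-residue of a box. -/
def rsd (c : ℕ × ℕ) : ℤ := (c.2 : ℤ) - (c.1 : ℤ)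

/-- The `ℓ`-residue of a box. -/
def res (ℓ : ℕ) (c : ℕ × ℕ) : ZMod ℓ := (rsd c : ZMod ℓ)

/-- `Res_ℓ(μ) ∈ ℤ^(ℤ/ℓℤ)`: the number of boxes of each `ℓ`-residue. -/
def Res (ℓ : ℕ) (μ : YoungDiagram) : ZMod ℓ → ℤ := fun i =>
  ((μ.cells.filter (fun c => res ℓ c = i)).card : ℤ)

/-- The constant vector `δ_ℓ = (1,…,1)`. -/
def delta (ℓ : ℕ) : ZMod ℓ → ℤ := fun _ => 1

/-- A box is removable if deleting it leaves a Young diagram. -/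
def IsRemovable (μ : YoungDiagram) (c : ℕ × ℕ) : Prop :=
  c ∈ μ.cells ∧ ∃ ν : YoungDiagram, ν.cells = μ.cells.erase c

/-- A box is addable if adjoining it yields a Young diagram. -/
def IsAddable (μ : YoungDiagram) (c : ℕ × ℕ) : Prop :=
  c ∉ μ.cells ∧ ∃ ν : YoungDiagram, ν.cells = insert c μ.cells

/-- One step: delete one removable box. -/
def RemoveStep (μ ν : YoungDiagram) : Prop :=
  ∃ c, IsRemovable μ c ∧ ν.cells = μ.cells.erase c

/-- `ν` is obtainable from `μ` by successively deleting removable boxes. -/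
def Obtainable (μ ν : YoungDiagram) : Prop :=
  Relation.ReflTransGen RemoveStep μ ν

/-- `λ` is an `ℓ`-core: no partition obtainable from `λ` by deleting removable boxes
differs from `λ` by exactly `ℓ` boxes of pairwise distinct `ℓ`-residues. -/
def IsCore (ℓ : ℕ) (lam : YoungDiagram) : Prop :=
  ¬ ∃ μ : YoungDiagram, Obtainable lam μ ∧ (lam.cells \ μ.cells).card = ℓ ∧
      Set.InjOn (res ℓ) ↑(lam.cells \ μ.cells)

/-- One step of the `ℓ`-core process: delete (via removable-box deletions) `ℓ` boxes
of pairwise distinct `ℓ`-residues. -/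
def CoreStep (ℓ : ℕ) (μ ν : YoungDiagram) : Prop :=
  Obtainable μ ν ∧ (μ.cells \ ν.cells).card = ℓ ∧
    Set.InjOn (res ℓ) ↑(μ.cells \ ν.cells)

/-- `ν` is the `ℓ`-core of `λ`: it is an `ℓ`-core reached from `λ` by the core process. -/
def ReachesCore (ℓ : ℕ) (lam ν : YoungDiagram) : Prop :=
  Relation.ReflTransGen (CoreStep ℓ) lam ν ∧ IsCore ℓ ν

/-!
Removing `ℓ` boxes of pairwise distinct residues subtracts `δ_ℓ` from `Res_ℓ`, so for existence
any partition with the right residues modulo `δ_ℓ` will do: it can be reduced to a core. Such a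
partition is found by adding boxes to the outer corners of a long staircase with steps of width
`ℓ`, whose own residues are equidistributed.

For uniqueness, read the boundary of a diagram as a Maya diagram, with a bead at `k` when the
boundary is vertical between the diagonals of contents `k` and `k + 1`. In a core, a bead at `k`
forces a bead at `k - ℓ`, since otherwise a rim hook with contents `k - ℓ + 1, …, k` could be
removed. Hence, for two cores, the beads of one contain those of the other along each residue
class. The difference of consecutive entries of `Res_ℓ` determines the number of beads in a
residue class, relative to the empty diagram. So if the two `Res_ℓ` differ by a constant, the
beads coincide, and they determine the diagram.
-/

section Removal

variable {μ ν : YoungDiagram}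

theorem exists_removeStep_of_lt (h : ν < μ) : ∃ μ', RemoveStep μ μ' ∧ ν ≤ μ' := by
  have hne : (μ.cells \ ν.cells).Nonempty :=
    Finset.sdiff_nonempty.2 fun hle => h.not_ge (YoungDiagram.cells_subset_iff.1 hle)
  obtain ⟨c, hc⟩ := (μ.cells \ ν.cells).exists_maximal hne
  obtain ⟨hcμ, hcν⟩ := Finset.mem_sdiff.1 hc.prop
  have hlower : IsLowerSet (↑(μ.cells.erase c) : Set (ℕ × ℕ)) := by
    rw [Finset.coe_erase]
    refine μ.isLowerSet.erase fun b hb hcb => ?_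
    exact (hc.eq_of_le (Finset.mem_sdiff.2 ⟨hb, fun hbν => hcν (ν.isLowerSet hcb hbν)⟩) hcb).symm
  exact ⟨⟨_, hlower⟩, ⟨c, ⟨hcμ, ⟨_, hlower⟩, rfl⟩, rfl⟩,
    YoungDiagram.cells_subset_iff.1 (Finset.subset_erase.2 ⟨h.le, hcν⟩)⟩

theorem RemoveStep.lt (h : RemoveStep μ ν) : ν < μ := by
  obtain ⟨c, ⟨hc, _⟩, hν⟩ := h
  exact YoungDiagram.cells_ssubset_iff.1 (hν ▸ Finset.erase_ssubset hc)

theorem obtainable_iff_le : Obtainable μ ν ↔ ν ≤ μ := by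
  refine ⟨fun h => ?_, fun h => ?_⟩
  · induction h with
    | refl => exact le_rfl
    | tail _ hstep ih => exact hstep.lt.le.trans ih
  · induction hn : μ.card using Nat.strong_induction_on generalizing μ with
    | _ n ih =>
      obtain rfl | hlt := h.eq_or_lt
      · exact .refl
      · obtain ⟨μ', hstep, hle⟩ := exists_removeStep_of_lt hlt
        have hcard : μ'.card < n := hn ▸ Finset.card_lt_card hstep.lt
        exact .head hstep (ih _ hcard hle rfl)

end Removal

section CoreReduction

variable {ℓ : ℕ} {μ ν : YoungDiagram}

theorem Res_eq_add_of_le (h : ν ≤ μ) (i : ZMod ℓ) :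
    Res ℓ μ i = Res ℓ ν i + ({c ∈ μ.cells \ ν.cells | res ℓ c = i}.card : ℤ) := by
  have hunion : {c ∈ μ.cells | res ℓ c = i} =
      {c ∈ ν.cells | res ℓ c = i} ∪ {c ∈ μ.cells \ ν.cells | res ℓ c = i} := by
    rw [← Finset.filter_union, Finset.union_sdiff_of_subset h]
  rw [Res, Res, hunion, Finset.card_union_of_disjoint
    (Finset.disjoint_filter_filter Finset.disjoint_sdiff), Nat.cast_add]

variable [NeZero ℓ]

theorem CoreStep.Res_eq (h : CoreStep ℓ μ ν) (i : ZMod ℓ) : Res ℓ μ i = Res ℓ ν i + 1 := by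
  obtain ⟨hobt, hcard, hinj⟩ := h
  have himage : (μ.cells \ ν.cells).image (res ℓ) = Finset.univ :=
    Finset.eq_univ_of_card _ (by rw [Finset.card_image_of_injOn hinj, hcard, ZMod.card])
  obtain ⟨c, hc, rfl⟩ := Finset.mem_image.1 (himage ▸ Finset.mem_univ i)
  have hfiber : {b ∈ μ.cells \ ν.cells | res ℓ b = res ℓ c} = {c} := by
    ext b
    simp only [Finset.mem_filter, Finset.mem_singleton]
    exact ⟨fun hb => hinj hb.1 hc hb.2, by rintro rfl; exact ⟨hc, rfl⟩⟩
  rw [Res_eq_add_of_le (obtainable_iff_le.1 hobt), hfiber, Finset.card_singleton, Nat.cast_one]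

theorem CoreStep.card_lt (h : CoreStep ℓ μ ν) : ν.card < μ.card := by
  have hsum := Finset.card_sdiff_add_card_eq_card (obtainable_iff_le.1 h.1)
  have hℓ := NeZero.pos ℓ
  have hcard := h.2.1
  simp only [YoungDiagram.card]
  omega

variable (ℓ μ) in
theorem exists_reachesCore : ∃ ν, ReachesCore ℓ μ ν := by
  induction hn : μ.card using Nat.strong_induction_on generalizing μ with
  | _ n ih =>
    by_cases hcore : IsCore ℓ μ
    · exact ⟨μ, .refl, hcore⟩
    · obtain ⟨μ', hstep⟩ : ∃ μ', CoreStep ℓ μ μ' := not_not.1 hcore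
      obtain ⟨ν, hreach, hν⟩ := ih _ (hn ▸ hstep.card_lt) _ rfl
      exact ⟨ν, .head hstep hreach, hν⟩

theorem exists_Res_eq_add_of_coreSteps (h : Relation.ReflTransGen (CoreStep ℓ) μ ν) :
    ∃ n : ℤ, ∀ i, Res ℓ μ i = Res ℓ ν i + n := by
  induction h with
  | refl => exact ⟨0, by simp⟩
  | tail _ hstep ih =>
    obtain ⟨n, hn⟩ := ih
    exact ⟨1 + n, fun i => by rw [hn, hstep.Res_eq, add_assoc]⟩

end CoreReduction

section Staircase

theorem exists_rowLen_eq {r : ℕ → ℕ} (hr : Antitone r) {N : ℕ} (hN : r N = 0) :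
    ∃ μ : YoungDiagram, ∀ i, μ.rowLen i = r i := by
  let cells := {c ∈ Finset.range N ×ˢ Finset.range (r 0) | c.2 < r c.1}
  have mem_cells (c : ℕ × ℕ) : c ∈ cells ↔ c.2 < r c.1 := by
    simp only [cells, Finset.mem_filter, Finset.mem_product, Finset.mem_range,
      and_iff_right_iff_imp]
    refine fun hc => ⟨?_, hc.trans_le (hr (Nat.zero_le _))⟩
    by_contra! hle
    have := hr hle
    omega
  have hlower : IsLowerSet (cells : Set (ℕ × ℕ)) := fun b c hcb hb => by
    rw [Finset.mem_coe, mem_cells] at hb ⊢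
    exact (hcb.2.trans_lt hb).trans_le (hr hcb.1)
  refine ⟨⟨cells, hlower⟩, fun i => eq_of_forall_lt_iff fun j => ?_⟩
  rw [← YoungDiagram.mem_iff_lt_rowLen, YoungDiagram.mem_mk, mem_cells]

theorem Res_eq_sum_count_rowLen (ℓ : ℕ) (μ : YoungDiagram) {N : ℕ} (hN : μ.colLen 0 ≤ N)
    (x : ZMod ℓ) :
    Res ℓ μ x =
      ((∑ i ∈ Finset.range N, (μ.rowLen i).count fun j => (j : ZMod ℓ) = x + i : ℕ) : ℤ) := by
  have hfst : ∀ c ∈ {c ∈ μ.cells | res ℓ c = x}, c.1 ∈ Finset.range N := fun c hc => by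
    have hmem : (c.1, 0) ∈ μ :=
      μ.up_left_mem le_rfl (Nat.zero_le c.2) (Finset.mem_filter.1 hc).1
    exact Finset.mem_range.2 ((YoungDiagram.mem_iff_lt_colLen.1 hmem).trans_le hN)
  rw [Res, Finset.card_eq_sum_card_fiberwise hfst]
  congr 1
  refine Finset.sum_congr rfl fun i _ => ?_
  rw [Nat.count_eq_card_filter_range]
  have hrow : {c ∈ {c ∈ μ.cells | res ℓ c = x} | c.1 = i} =
      {j ∈ Finset.range (μ.rowLen i) | ((j : ℕ) : ZMod ℓ) = x + i}.map
        (Function.Embedding.sectR i ℕ) := by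
    ext ⟨a, j⟩
    simp only [Finset.mem_filter, Finset.mem_map, Finset.mem_range, YoungDiagram.mem_cells,
      YoungDiagram.mem_iff_lt_rowLen, res, rsd, Int.cast_sub, Int.cast_natCast, sub_eq_iff_eq_add,
      Function.Embedding.sectR_apply, Prod.mk.injEq]
    constructor
    · rintro ⟨⟨hj, hres⟩, rfl⟩
      exact ⟨j, ⟨hj, hres⟩, rfl, rfl⟩
    · rintro ⟨j, ⟨hj, hres⟩, rfl, rfl⟩
      exact ⟨⟨hj, hres⟩, rfl⟩
  rw [hrow, Finset.card_map]

theorem count_natCast_eq (ℓ q : ℕ) [NeZero ℓ] (x : ZMod ℓ) :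
    (ℓ * q).count (fun j => (j : ZMod ℓ) = x) = q := by
  have h := Nat.count_modEq_card (ℓ * q) (NeZero.pos ℓ) x.val
  simp only [← ZMod.natCast_eq_natCast_iff, ZMod.natCast_zmod_val] at h
  simpa [NeZero.pos ℓ] using h

theorem exists_finset_card_fiber_eq {α β : Type*} [Finite β] [DecidableEq β] (f : α → β)
    (hf : ∀ b, (f ⁻¹' {b}).Infinite) (e : β → ℕ) :
    ∃ s : Finset α, ∀ b, {a ∈ s | f a = b}.card = e b := by
  classical
  cases nonempty_fintype β
  choose t ht hcard using fun b => (hf b).exists_subset_card_eq (e b)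
  refine ⟨Finset.univ.biUnion t, fun b => ?_⟩
  rw [← hcard b]
  congr 1
  ext a
  simp only [Finset.mem_filter, Finset.mem_biUnion, Finset.mem_univ, true_and]
  refine ⟨?_, fun ha => ⟨⟨b, ha⟩, ht b ha⟩⟩
  rintro ⟨⟨b', ha⟩, rfl⟩
  obtain rfl : f a = b' := ht b' ha
  exact ha

theorem infinite_natCast_fiber (ℓ : ℕ) [NeZero ℓ] (x : ZMod ℓ) :
    ((Nat.cast : ℕ → ZMod ℓ) ⁻¹' {x}).Infinite := by
  refine Set.infinite_of_injective_forall_mem (f := fun m : ℕ => x.val + ℓ * m) ?_ ?_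
  · intro a b h
    exact Nat.eq_of_mul_eq_mul_left (NeZero.pos ℓ) (Nat.add_left_cancel h)
  · simp

/-- Row lengths of a staircase with `N` steps of height `1` and width `ℓ`, with an extra box at the
end of each row in `S`. The staircase alone has each residue equally often, and the extra box of row
`i` has residue `-i`. -/
def staircaseRow (ℓ N : ℕ) (S : Finset ℕ) (i : ℕ) : ℕ :=
  ℓ * (N - i) + if i ∈ S then 1 else 0

theorem staircaseRow_antitone (ℓ : ℕ) [NeZero ℓ] {N : ℕ} {S : Finset ℕ} (hS : S ⊆ Finset.range N) :
    Antitone (staircaseRow ℓ N S) := antitone_nat_of_succ_le fun i => by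
  have hℓ := NeZero.pos ℓ
  by_cases hi : i < N
  · have hrow : ℓ * (N - i) = ℓ * (N - (i + 1)) + ℓ := by
      rw [← Nat.mul_succ]
      congr 1
      omega
    simp only [staircaseRow, hrow]
    split_ifs <;> omega
  · have hiS : i + 1 ∉ S := fun h => hi (Nat.lt_of_succ_lt (Finset.mem_range.1 (hS h)))
    simp [staircaseRow, hiS, Nat.sub_eq_zero_of_le (Nat.le_succ_of_le (not_lt.1 hi))]

theorem count_staircaseRow (ℓ N : ℕ) [NeZero ℓ] (S : Finset ℕ) (x : ZMod ℓ) (i : ℕ) :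
    (staircaseRow ℓ N S i).count (fun j => (j : ZMod ℓ) = x + i) =
      (N - i) + if i ∈ S ∧ (i : ZMod ℓ) = -x then 1 else 0 := by
  have hzero : 0 = x + i ↔ (i : ZMod ℓ) = -x := by
    rw [eq_comm, add_comm, add_eq_zero_iff_eq_neg]
  by_cases hi : i ∈ S
  · simp [staircaseRow, hi, Nat.count_succ, count_natCast_eq, hzero]
  · simp [staircaseRow, hi, count_natCast_eq]

theorem exists_Res_eq_card_add (ℓ : ℕ) [NeZero ℓ] (S : Finset ℕ) :
    ∃ (μ : YoungDiagram) (n : ℤ), ∀ x,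
      Res ℓ μ x = ({i ∈ S | ((i : ℕ) : ZMod ℓ) = -x}.card : ℤ) + n := by
  obtain ⟨N, hSN⟩ := S.exists_nat_subset_range
  have hrowN : staircaseRow ℓ N S N = 0 := by
    have hN : N ∉ S := fun h => (Finset.mem_range.1 (hSN h)).false
    simp [staircaseRow, hN]
  obtain ⟨μ, hμ⟩ := exists_rowLen_eq (staircaseRow_antitone ℓ hSN) hrowN
  have hcol : μ.colLen 0 ≤ N := by
    by_contra! hlt
    have hmem := YoungDiagram.mem_iff_lt_rowLen.1 (YoungDiagram.mem_iff_lt_colLen.2 hlt)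
    simp [hμ, hrowN] at hmem
  have hS (x : ZMod ℓ) : {i ∈ Finset.range N | i ∈ S ∧ (i : ZMod ℓ) = -x} =
      {i ∈ S | ((i : ℕ) : ZMod ℓ) = -x} := by
    rw [← Finset.filter_filter, Finset.filter_mem_eq_inter, Finset.inter_eq_right.2 hSN]
  refine ⟨μ, ((∑ i ∈ Finset.range N, (N - i) : ℕ) : ℤ), fun x => ?_⟩
  simp only [Res_eq_sum_count_rowLen ℓ μ hcol, hμ, count_staircaseRow, Finset.sum_add_distrib,
    ← Finset.card_filter, hS, Nat.cast_add, add_comm]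

theorem exists_eq_Res_add (ℓ : ℕ) [NeZero ℓ] (d : ZMod ℓ → ℤ) :
    ∃ (μ : YoungDiagram) (n : ℤ), ∀ i, d i = Res ℓ μ i + n := by
  obtain ⟨i₀, hmin⟩ := Finite.exists_min d
  obtain ⟨S, hS⟩ := exists_finset_card_fiber_eq (Nat.cast : ℕ → ZMod ℓ)
    (infinite_natCast_fiber ℓ) fun i => (d (-i) - d i₀).toNat
  obtain ⟨μ, n, hμ⟩ := exists_Res_eq_card_add ℓ S
  refine ⟨μ, d i₀ - n, fun i => ?_⟩
  rw [hμ, hS, neg_neg, Int.toNat_of_nonneg (sub_nonneg.2 (hmin i))]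
  ring

end Staircase

section Rim

/-- The column of the first box on the diagonal of content `k` that lies outside `μ`; its row is
`rimCol μ k - k`. As `k` runs over `ℤ` these boxes trace the boundary of `μ`. The box of content `k`
in column `s` lies in row `s - k`, so it is outside `μ` when `μ.colLen s ≤ s - k`. -/
noncomputable def rimCol (μ : YoungDiagram) (k : ℤ) : ℕ :=
  sInf {s : ℕ | (μ.colLen s : ℤ) + k ≤ s}

/-- The boundary of `μ` is vertical between the diagonals of contents `k` and `k + 1`: there is a
bead at `k` in the Maya diagram of `μ`. -/
def IsBead (μ : YoungDiagram) (k : ℤ) : Prop :=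
  rimCol μ (k + 1) = rimCol μ k

variable {μ ν : YoungDiagram} {k : ℤ}

theorem colLen_rimCol_add_le (μ : YoungDiagram) (k : ℤ) :
    (μ.colLen (rimCol μ k) : ℤ) + k ≤ rimCol μ k := by
  refine Nat.sInf_mem (s := {s : ℕ | (μ.colLen s : ℤ) + k ≤ s}) ⟨μ.colLen 0 + k.toNat, ?_⟩
  have := μ.colLen_anti 0 (μ.colLen 0 + k.toNat) (Nat.zero_le _)
  simp only [Set.mem_ofPred_eq]
  omega

theorem rimCol_le_iff {s : ℕ} : rimCol μ k ≤ s ↔ (μ.colLen s : ℤ) + k ≤ s := by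
  refine ⟨fun h => ?_, fun h => Nat.sInf_le h⟩
  have := μ.colLen_anti _ _ h
  have := colLen_rimCol_add_le μ k
  omega

theorem mem_iff_lt_rimCol {c : ℕ × ℕ} : c ∈ μ ↔ c.2 < rimCol μ (rsd c) := by
  obtain ⟨a, b⟩ := c
  simp only [← not_le, rimCol_le_iff, YoungDiagram.mem_iff_lt_colLen, rsd]
  omega

theorem le_rimCol (μ : YoungDiagram) (k : ℤ) : k ≤ rimCol μ k := by
  have := colLen_rimCol_add_le μ k
  omega

theorem rimCol_mono (μ : YoungDiagram) : Monotone (rimCol μ) := fun k k' hk => by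
  have := colLen_rimCol_add_le μ k'
  rw [rimCol_le_iff]
  omega

theorem rimCol_succ_le (μ : YoungDiagram) (k : ℤ) : rimCol μ (k + 1) ≤ rimCol μ k + 1 := by
  have := colLen_rimCol_add_le μ k
  have := μ.colLen_anti _ _ (Nat.le_add_right (rimCol μ k) 1)
  rw [rimCol_le_iff]
  push_cast
  omega

theorem sub_rimCol_mono (μ : YoungDiagram) : Monotone fun k => k - (rimCol μ k : ℤ) :=
  monotone_int_of_le_succ fun k => by
    have := rimCol_succ_le μ k
    omega

theorem rimCol_succ_of_not_isBead (h : ¬ IsBead μ k) : rimCol μ (k + 1) = rimCol μ k + 1 :=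
  le_antisymm (rimCol_succ_le μ k)
    ((rimCol_mono μ (lt_add_one k).le).lt_of_ne' h)

theorem rimCol_eq_zero (h : k ≤ -μ.colLen 0) : rimCol μ k = 0 := by
  rw [← Nat.le_zero, rimCol_le_iff]
  push_cast
  omega

theorem rimCol_injective : Function.Injective rimCol := fun μ ν h => by
  ext c
  rw [YoungDiagram.mem_cells, YoungDiagram.mem_cells, mem_iff_lt_rimCol, mem_iff_lt_rimCol, h]

theorem eq_of_isBead_iff (h : ∀ k, IsBead μ k ↔ IsBead ν k) : μ = ν := by
  have hsucc (k : ℤ) (hk : rimCol μ k = rimCol ν k) : rimCol μ (k + 1) = rimCol ν (k + 1) := by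
    by_cases hbead : IsBead μ k
    · exact hbead.trans (hk.trans ((h k).1 hbead).symm)
    · rw [rimCol_succ_of_not_isBead hbead, rimCol_succ_of_not_isBead (mt (h k).2 hbead), hk]
  let k₀ : ℤ := min (-μ.colLen 0) (-ν.colLen 0)
  have hzero (k : ℤ) (hk : k ≤ k₀) : rimCol μ k = rimCol ν k := by
    rw [rimCol_eq_zero (hk.trans (min_le_left _ _)), rimCol_eq_zero (hk.trans (min_le_right _ _))]
  refine rimCol_injective (funext fun k => ?_)
  obtain hk | hk := le_total k k₀
  · exact hzero k hk
  · exact Int.leInduction (hzero k₀ le_rfl) (fun j _ => hsucc j) k hk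

theorem card_filter_rsd_eq (μ : YoungDiagram) (k : ℤ) :
    ({c ∈ μ.cells | rsd c = k}.card : ℤ) = rimCol μ k - k.toNat := by
  have hinj : Set.InjOn Prod.snd ({c ∈ μ.cells | rsd c = k} : Set (ℕ × ℕ)) := by
    rintro c ⟨-, rfl⟩ c' ⟨-, hc'⟩ h
    simp only [rsd] at hc'
    exact Prod.ext (by omega) h
  have himage : {c ∈ μ.cells | rsd c = k}.image Prod.snd = Finset.Ico k.toNat (rimCol μ k) := by
    ext s
    simp only [Finset.mem_image, Finset.mem_filter, YoungDiagram.mem_cells, mem_iff_lt_rimCol,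
      Finset.mem_Ico]
    constructor
    · rintro ⟨c, ⟨hc, rfl⟩, rfl⟩
      exact ⟨by simp only [rsd]; omega, hc⟩
    · rintro ⟨hks, hs⟩
      have hrsd : rsd ((s - k).toNat, s) = k := by simp only [rsd]; omega
      exact ⟨((s - k).toNat, s), ⟨hrsd.symm ▸ hs, hrsd⟩, rfl⟩
  have := le_rimCol μ k
  rw [← Finset.card_image_of_injOn (by simpa using hinj), himage, Nat.card_Ico]
  omega

end Rim

section RimHook

variable {μ : YoungDiagram} {j k : ℤ}

theorem exists_le_mem_iff_lt (μ : YoungDiagram) {f : ℤ → ℤ} (hf : Monotone f)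
    (hf' : Monotone fun k => k - f k) : ∃ ν ≤ μ, ∀ c, c ∈ ν ↔ c ∈ μ ∧ c.2 < f (rsd c) := by
  have hlower : IsLowerSet (({c ∈ μ.cells | c.2 < f (rsd c)} : Finset (ℕ × ℕ)) : Set (ℕ × ℕ)) := by
    rintro ⟨a, b⟩ ⟨a', b'⟩ hle hmem
    rw [Finset.mem_coe, Finset.mem_filter] at hmem ⊢
    refine ⟨μ.isLowerSet hle hmem.1, ?_⟩
    obtain ⟨ha, hb⟩ := Prod.mk_le_mk.1 hle
    have hrow : f (b - a) ≤ f (b - a') := hf (by omega)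
    have hcol : b' - a' - f (b' - a') ≤ b - a' - f (b - a') := hf' (by omega)
    have := hmem.2
    simp only [rsd] at this ⊢
    omega
  exact ⟨⟨_, hlower⟩, Finset.filter_subset _ _, fun c => Finset.mem_filter⟩

/- Lowering the boundary by one on the diagonals of contents in `(j, k]` moves the bead at `k` to
the gap at `j`; the boxes removed form a rim hook. -/
theorem exists_le_forall_mem_sdiff_iff (hj : ¬ IsBead μ j) (hk : IsBead μ k) :
    ∃ ν ≤ μ, ∀ c, c ∈ μ.cells \ ν.cells ↔
      rsd c ∈ Set.Ioc j k ∧ c.2 + 1 = rimCol μ (rsd c) := by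
  let f (i : ℤ) : ℤ := rimCol μ i - if j < i ∧ i ≤ k then 1 else 0
  have hstep (i : ℤ) : f i ≤ f (i + 1) ∧ f (i + 1) ≤ f i + 1 := by
    have hmono := rimCol_mono μ (lt_add_one i).le
    have hsucc := rimCol_succ_le μ i
    have hgap : i = j → rimCol μ (i + 1) = rimCol μ i + 1 := by
      rintro rfl
      exact rimCol_succ_of_not_isBead hj
    have hbead : i = k → rimCol μ (i + 1) = rimCol μ i := by
      rintro rfl
      exact hk
    simp only [f]
    split_ifs <;> omega
  obtain ⟨ν, hν, hmem⟩ := exists_le_mem_iff_lt μ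
    (monotone_int_of_le_succ fun i => (hstep i).1)
    (monotone_int_of_le_succ fun i => by linarith [(hstep i).2])
  refine ⟨ν, hν, fun c => ?_⟩
  rw [Finset.mem_sdiff, YoungDiagram.mem_cells, YoungDiagram.mem_cells, hmem, mem_iff_lt_rimCol,
    Set.mem_Ioc]
  simp only [f]
  split_ifs with h <;> omega

theorem exists_le_bijOn_rsd (hj : ¬ IsBead μ j) (hk : IsBead μ k) :
    ∃ ν ≤ μ, Set.BijOn rsd ↑(μ.cells \ ν.cells) (Set.Ioc j k) := by
  obtain ⟨ν, hν, hmem⟩ := exists_le_forall_mem_sdiff_iff hj hk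
  refine ⟨ν, hν, fun c hc => ((hmem c).1 hc).1, fun c hc c' hc' h => ?_, fun i hi => ?_⟩
  · have hcol := ((hmem c).1 hc).2
    have hcol' := ((hmem c').1 hc').2
    rw [h, ← hcol'] at hcol
    simp only [rsd] at h
    exact Prod.ext (by omega) (by omega)
  · have hpos : rimCol μ j + 1 ≤ rimCol μ i :=
      (rimCol_succ_of_not_isBead hj).symm.trans_le (rimCol_mono μ hi.1)
    have hrow : i + 1 ≤ rimCol μ i := by
      have hle : k + 1 ≤ rimCol μ k := (le_rimCol μ (k + 1)).trans_eq (congrArg Nat.cast hk)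
      have := sub_rimCol_mono μ hi.2
      simp only at this
      omega
    have hrsd : rsd ((rimCol μ i - 1 - i).toNat, rimCol μ i - 1) = i := by
      simp only [rsd]
      omega
    exact ⟨_, (hmem _).2 ⟨hrsd.symm ▸ hi, by rw [hrsd]; omega⟩, hrsd⟩

theorem injOn_intCast_Ioc (ℓ : ℕ) (k : ℤ) :
    Set.InjOn (Int.cast : ℤ → ZMod ℓ) (Set.Ioc (k - ℓ) k) := fun a ha b hb h => by
  have hdvd := (ZMod.intCast_eq_intCast_iff_dvd_sub a b ℓ).1 h
  have habs : |b - a| < ℓ := abs_lt.2 ⟨by linarith [ha.2, hb.1], by linarith [ha.1, hb.2]⟩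
  linarith [Int.eq_zero_of_abs_lt_dvd hdvd habs]

theorem IsCore.isBead_sub {ℓ : ℕ} (hμ : IsCore ℓ μ) (hk : IsBead μ k) : IsBead μ (k - ℓ) := by
  by_contra hj
  obtain ⟨ν, hν, hbij⟩ := exists_le_bijOn_rsd hj hk
  refine hμ ⟨ν, obtainable_iff_le.2 hν, ?_, (injOn_intCast_Ioc ℓ k).comp hbij.injOn hbij.mapsTo⟩
  rw [← Finset.coe_Ioc] at hbij
  rw [hbij.finsetCard_eq, Int.card_Ioc]
  omega

end RimHook

section Uniqueness

variable {ℓ : ℕ} {μ ν : YoungDiagram}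

theorem IsCore.isLowerSet_isBead (hμ : IsCore ℓ μ) (k : ℤ) :
    IsLowerSet {m : ℤ | IsBead μ (k + ℓ * m)} := by
  refine isLowerSet_setOfPred.2 (antitone_int_of_succ_le fun m hm => ?_)
  have := hμ.isBead_sub hm
  rwa [show k + ℓ * (m + 1) - ℓ = k + ℓ * m by ring] at this

variable [NeZero ℓ]

-- In the discrete space `ℤ`, a `HasSum` is a sum with finitely many nonzero terms.
variable (ℓ) in
theorem hasSum_card_filter_rsd (μ : YoungDiagram) (k : ℤ) :
    HasSum (fun m : ℤ => ({c ∈ μ.cells | rsd c = k + ℓ * m}.card : ℤ)) (Res ℓ μ k) := by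
  simp only [Res, Finset.card_filter, Nat.cast_sum]
  refine hasSum_sum fun c _ => ?_
  by_cases hc : res ℓ c = k
  · obtain ⟨m, hm⟩ := (ZMod.intCast_eq_intCast_iff_dvd_sub k (rsd c) ℓ).1 hc.symm
    have hiff (m' : ℤ) : rsd c = k + ℓ * m' ↔ m' = m := by
      rw [← sub_eq_iff_eq_add', hm, mul_right_inj' (NeZero.ne _), eq_comm]
    simpa [hiff, hc] using hasSum_ite_eq m (1 : ℤ)
  · have hne (m : ℤ) : rsd c ≠ k + ℓ * m := fun h => hc (by simp [res, h])
    simp [hne, hc]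

variable (ℓ) in
theorem hasSum_rimCol_sub (μ ν : YoungDiagram) (k : ℤ) :
    HasSum (fun m : ℤ => (rimCol μ (k + ℓ * m) : ℤ) - rimCol ν (k + ℓ * m))
      (Res ℓ μ k - Res ℓ ν k) := by
  simpa only [card_filter_rsd_eq, sub_sub_sub_cancel_right] using
    (hasSum_card_filter_rsd ℓ μ k).sub (hasSum_card_filter_rsd ℓ ν k)

theorem isBead_iff_of_imp {C : ℤ} (hC : ∀ i, Res ℓ μ i - Res ℓ ν i = C) {k : ℤ}
    (himp : ∀ m : ℤ, IsBead μ (k + ℓ * m) → IsBead ν (k + ℓ * m)) :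
    IsBead μ k ↔ IsBead ν k := by
  let rise (μ : YoungDiagram) (j : ℤ) : ℤ := rimCol μ (j + 1) - rimCol μ j
  have hsum : HasSum (fun m : ℤ => rise μ (k + ℓ * m) - rise ν (k + ℓ * m)) 0 := by
    have h := (hasSum_rimCol_sub ℓ μ ν (k + 1)).sub (hasSum_rimCol_sub ℓ μ ν k)
    rw [hC, hC, sub_self] at h
    simpa only [rise, add_right_comm k 1, sub_sub_sub_comm] using h
  have hnonneg (m : ℤ) : 0 ≤ rise μ (k + ℓ * m) - rise ν (k + ℓ * m) := by
    simp only [rise]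
    by_cases hbead : IsBead μ (k + ℓ * m)
    · rw [hbead, himp m hbead, sub_self, sub_self, sub_self]
    · have := rimCol_succ_of_not_isBead hbead
      have := rimCol_succ_le ν (k + ℓ * m)
      omega
  have hzero := congrFun ((hasSum_zero_iff_of_nonneg hnonneg).1 hsum) 0
  simp only [rise, mul_zero, add_zero, Pi.zero_apply] at hzero
  rw [IsBead, IsBead]
  omega

/- Along a residue class the bead sets of two cores are initial segments of `ℤ`, so one contains the
other. -/
theorem IsCore.isBead_iff (hμ : IsCore ℓ μ) (hν : IsCore ℓ ν) {C : ℤ}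
    (hC : ∀ i, Res ℓ μ i - Res ℓ ν i = C) (k : ℤ) : IsBead μ k ↔ IsBead ν k := by
  obtain hsub | hsub := (hμ.isLowerSet_isBead k).total (hν.isLowerSet_isBead k)
  · exact isBead_iff_of_imp hC hsub
  · exact (isBead_iff_of_imp (C := -C) (fun i => by rw [← hC i, neg_sub]) hsub).symm

theorem IsCore.eq_of_Res_sub_eq (hμ : IsCore ℓ μ) (hν : IsCore ℓ ν) {C : ℤ}
    (hC : ∀ i, Res ℓ μ i - Res ℓ ν i = C) : μ = ν :=
  eq_of_isBead_iff (hμ.isBead_iff hν hC)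

end Uniqueness

/-- Every `d ∈ ℤ^(ℤ/ℓℤ)` has a unique presentation
`d = Res_ℓ(ν) + n·δ_ℓ` with `ν` an `ℓ`-core and `n ∈ ℤ`. -/
theorem exists_unique_core_presentation (ℓ : ℕ) [NeZero ℓ] (d : ZMod ℓ → ℤ) :
    (∃ (ν : YoungDiagram) (n : ℤ), IsCore ℓ ν ∧
      d = fun i => Res ℓ ν i + n * delta ℓ i) ∧
    (∀ (ν ν' : YoungDiagram) (n n' : ℤ), IsCore ℓ ν → IsCore ℓ ν' →
      (fun i => Res ℓ ν i + n * delta ℓ i) = (fun i => Res ℓ ν' i + n' * delta ℓ i) →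
      ν = ν' ∧ n = n') := by
  constructor
  · obtain ⟨μ, n, hμ⟩ := exists_eq_Res_add ℓ d
    obtain ⟨ν, hreach⟩ := exists_reachesCore ℓ μ
    obtain ⟨n', hν⟩ := exists_Res_eq_add_of_coreSteps hreach.1
    exact ⟨ν, n' + n, hreach.2, funext fun i => by rw [hμ, hν, delta, mul_one, add_assoc]⟩
  · intro ν ν' n n' hν hν' h
    have hdiff (i : ZMod ℓ) : Res ℓ ν i - Res ℓ ν' i = n' - n := by
      have hi := congrFun h i
      simp only [delta] at hi
      linarith
    obtain rfl := hν.eq_of_Res_sub_eq hν' hdiff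
    exact ⟨rfl, by linarith [hdiff 0]⟩

end CM
end

section
/- Let ℓ ≥ 1 and θ ∈ ℂ^(ℤ/ℓℤ) with Σ_{i ∈ ℤ/ℓℤ} θ_i ≠ 0. Then any two semisimple θ-representations of the double cyclic quiver with the same dimension vector d ∈ ℕ^(ℤ/ℓℤ) are isomorphic. -/
namespace CM

/-- A `θ`-representation of the double cyclic quiver with `ℓ` vertices and
dimension vector `d`.  The moment map relation at the vertex `i + 1` reads
`X_{i+1} ∘ Y_{i+1} - Y_i ∘ X_i = θ_{i+1} · id`; quantifying over all `i` gives the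
relation at every vertex. -/
structure Rep (ℓ : ℕ) (θ : ZMod ℓ → ℂ) (d : ZMod ℓ → ℕ) where
  X : ∀ i : ZMod ℓ, (Fin (d (i + 1)) → ℂ) →ₗ[ℂ] (Fin (d i) → ℂ)
  Y : ∀ i : ZMod ℓ, (Fin (d i) → ℂ) →ₗ[ℂ] (Fin (d (i + 1)) → ℂ)
  rel : ∀ i : ZMod ℓ,
    X (i + 1) ∘ₗ Y (i + 1) - Y i ∘ₗ X i = θ (i + 1) • LinearMap.id

/-- A subrepresentation: a family of subspaces stable under all the maps. -/
structure Subrep {ℓ : ℕ} {θ : ZMod ℓ → ℂ} {d : ZMod ℓ → ℕ} (R : Rep ℓ θ d) where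
  U : ∀ i : ZMod ℓ, Submodule ℂ (Fin (d i) → ℂ)
  hX : ∀ i : ZMod ℓ, ∀ v ∈ U (i + 1), R.X i v ∈ U i
  hY : ∀ i : ZMod ℓ, ∀ v ∈ U i, R.Y i v ∈ U (i + 1)

/-- A representation is semisimple if every subrepresentation has a complementary
subrepresentation. -/
def IsSemisimple {ℓ : ℕ} {θ : ZMod ℓ → ℂ} {d : ZMod ℓ → ℕ} (R : Rep ℓ θ d) : Prop :=
  ∀ S : Subrep R, ∃ T : Subrep R, ∀ i, IsCompl (S.U i) (T.U i)

/-- Isomorphism of two `θ`-representations with the same dimension vector. -/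
def Isomorphic {ℓ : ℕ} {θ : ZMod ℓ → ℂ} {d : ZMod ℓ → ℕ} (R R' : Rep ℓ θ d) : Prop :=
  ∃ φ : ∀ i : ZMod ℓ, (Fin (d i) → ℂ) ≃ₗ[ℂ] (Fin (d i) → ℂ),
    (∀ i : ZMod ℓ, ∀ v, φ i (R.X i v) = R'.X i (φ (i + 1) v)) ∧
    (∀ i : ZMod ℓ, ∀ v, φ (i + 1) (R.Y i v) = R'.Y i (φ i v))

/-!
Let `α` be the common dimension vector and write `(f, g) ↦ tr (f g)` for the trace pairing. A family
`g : W → V` is sent to the defect `g ∘ N - M ∘ g` of being a morphism, and likewise for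
`f : V → W`; by the moment map relation and cyclicity of the trace, the two spaces of defects are
orthogonal for the (signed) trace pairing. Counting dimensions gives
`dim Hom(M, N) + dim Hom(N, M) ≥ 2 ∑ αᵢ² - 2 ∑ αᵢ αᵢ₊₁ = ∑ (αᵢ₊₁ - αᵢ)² ≥ 0`.
If both `Hom` spaces vanish, `α` is therefore constant, and taking traces in the relation gives
`α₀ ∑ θᵢ = 0`, hence `α = 0`. Otherwise a nonzero morphism `f`, say `M → N`, splits off the common
summand `M / ker f ≅ im f`, and one concludes by induction on the total dimension, applied to
`ker f` and a complement of `im f`.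
-/

open Module

section LinearAlgebra

section Ring

variable {R A B : Type*} [Ring R] [AddCommGroup A] [Module R A] [AddCommGroup B] [Module R B]

theorem projectionOnto_apply_eq_restrict (f : A →ₗ[R] B) {U C : Submodule R A}
    {U' C' : Submodule R B} (hUC : IsCompl U C) (hUC' : IsCompl U' C') (hU : ∀ x ∈ U, f x ∈ U')
    (hC : ∀ x ∈ C, f x ∈ C') (a : A) :
    U'.projectionOnto C' hUC' (f a) = f.restrict hU (U.projectionOnto C hUC a) := by
  obtain ⟨u, c, hu, hc, rfl⟩ := Submodule.codisjoint_iff_exists_add_eq.1 hUC.codisjoint a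
  rw [map_add, map_add, map_add, Submodule.projectionOnto_apply_of_mem_left _ (hU u hu),
    Submodule.projectionOnto_apply_of_mem_right _ (hC c hc),
    Submodule.projectionOnto_apply_of_mem_left _ hu,
    Submodule.projectionOnto_apply_of_mem_right _ hc, add_zero, add_zero]
  rfl

theorem bijective_comp_projectionOnto_ker_add (f : A →ₗ[R] B) {C : Submodule R A}
    {D : Submodule R B} (hC : IsCompl (LinearMap.ker f) C) (hD : IsCompl (LinearMap.range f) D)
    (φ : LinearMap.ker f ≃ₗ[R] D) : Function.Bijective
      (D.subtype ∘ₗ φ.toLinearMap ∘ₗ (LinearMap.ker f).projectionOnto C hC + f) := by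
  refine ⟨(injective_iff_map_eq_zero _).2 fun v hv => ?_, fun w => ?_⟩
  · have hsum : (φ ((LinearMap.ker f).projectionOnto C hC v) : B) + f v = 0 := hv
    have hfD : f v ∈ D := by
      rw [eq_neg_of_add_eq_zero_right hsum]
      exact D.neg_mem (φ _).2
    have hfv : f v = 0 := Submodule.disjoint_def.1 hD.disjoint _ ⟨v, rfl⟩ hfD
    have hvC : v ∈ C := by
      rw [hfv, add_zero, Submodule.coe_eq_zero, φ.map_eq_zero_iff] at hsum
      exact (Submodule.projectionOnto_apply_eq_zero_iff hC).1 hsum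
    exact Submodule.disjoint_def.1 hC.disjoint v hfv hvC
  · obtain ⟨_, d, ⟨v, rfl⟩, hd, rfl⟩ := Submodule.codisjoint_iff_exists_add_eq.1 hD.codisjoint w
    obtain ⟨k, c, hk, hc, rfl⟩ := Submodule.codisjoint_iff_exists_add_eq.1 hC.codisjoint v
    refine ⟨φ.symm ⟨d, hd⟩ + c, ?_⟩
    simp [LinearMap.mem_ker.1 hk, Submodule.projectionOnto_apply_of_mem_right _ hc, add_comm]

end Ring

/-- The pairing `(g, f) ↦ tr (g ∘ f)` between `Hom(B, A)` and `Hom(A, B)`. -/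
noncomputable def tracePairing (K A B : Type*) [CommRing K] [AddCommGroup A] [Module K A]
    [AddCommGroup B] [Module K B] : (B →ₗ[K] A) →ₗ[K] Dual K (A →ₗ[K] B) :=
  (LinearMap.llcomp K A B A).compr₂ (LinearMap.trace K A)

@[simp]
theorem tracePairing_apply {K A B : Type*} [CommRing K] [AddCommGroup A] [Module K A]
    [AddCommGroup B] [Module K B] (g : B →ₗ[K] A) (f : A →ₗ[K] B) :
    tracePairing K A B g f = LinearMap.trace K A (g ∘ₗ f) :=
  rfl

variable {K : Type*} [Field K]

theorem finrank_add_finrank_le_of_forall_apply_eq_zero {E F : Type*} [AddCommGroup E] [Module K E]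
    [AddCommGroup F] [Module K F] [FiniteDimensional K E] {B : F →ₗ[K] Dual K E}
    (hB : Function.Injective B) {P : Submodule K F} {Q : Submodule K E}
    (h : ∀ x ∈ P, ∀ y ∈ Q, B x y = 0) : finrank K P + finrank K Q ≤ finrank K E := by
  have hle : P.map B ≤ Q.dualAnnihilator := by
    rintro _ ⟨x, hx, rfl⟩
    exact (Submodule.mem_dualAnnihilator _).2 (h x hx)
  calc finrank K P + finrank K Q
      = finrank K (P.map B) + finrank K Q := by
        rw [(Submodule.equivMapOfInjective B hB P).finrank_eq]
    _ ≤ finrank K Q.dualAnnihilator + finrank K Q := by gcongr; exact Submodule.finrank_mono hle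
    _ = finrank K E := by rw [add_comm, Subspace.finrank_add_finrank_dualAnnihilator_eq]

theorem tracePairing_injective (A B : Type*) [AddCommGroup A] [Module K A] [AddCommGroup B]
    [Module K B] [FiniteDimensional K A] : Function.Injective (tracePairing K A B) := by
  refine (injective_iff_map_eq_zero _).2 fun g hg => LinearMap.ext fun b => ?_
  rw [LinearMap.zero_apply, ← forall_dual_apply_eq_zero_iff K]
  intro ξ
  have htrace : LinearMap.trace K A (g ∘ₗ ξ.smulRight b) = 0 :=
    LinearMap.congr_fun hg (ξ.smulRight b)
  have hcomp : g ∘ₗ ξ.smulRight b = ξ.smulRight (g b) := by ext; simp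
  rwa [hcomp, LinearMap.trace_smulRight] at htrace

end LinearAlgebra

section Cyclic

variable {ℓ : ℕ} [NeZero ℓ]

theorem sum_comp_add_one {A : Type*} [AddCommMonoid A] (g : ZMod ℓ → A) :
    ∑ i, g (i + 1) = ∑ i, g i :=
  Equiv.sum_comp (Equiv.addRight (1 : ZMod ℓ)) g

theorem apply_eq_apply_zero_of_sum_sq_le {A : Type*} [CommRing A] [LinearOrder A]
    [IsStrictOrderedRing A] {a : ZMod ℓ → A} (h : ∑ i, a i ^ 2 ≤ ∑ i, a i * a (i + 1))
    (i : ZMod ℓ) : a i = a 0 := by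
  have hsum : ∑ i, (a (i + 1) - a i) ^ 2 ≤ 0 :=
    calc ∑ i, (a (i + 1) - a i) ^ 2
        = ∑ i, a (i + 1) ^ 2 + ∑ i, a i ^ 2 - 2 * ∑ i, a i * a (i + 1) := by
          rw [Finset.mul_sum, ← Finset.sum_add_distrib, ← Finset.sum_sub_distrib]
          exact Finset.sum_congr rfl fun i _ => by ring
      _ = 2 * (∑ i, a i ^ 2 - ∑ i, a i * a (i + 1)) := by
          rw [sum_comp_add_one fun i => a i ^ 2]; ring
      _ ≤ 0 := by linarith
  have hperiodic : Function.Periodic a 1 := fun i => by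
    have hzero := (Finset.sum_eq_zero_iff_of_nonneg fun i _ => sq_nonneg (a (i + 1) - a i)).1
      (hsum.antisymm (Finset.sum_nonneg fun i _ => sq_nonneg _)) i (Finset.mem_univ i)
    exact sub_eq_zero.1 (pow_eq_zero_iff two_ne_zero |>.1 hzero)
  simpa using hperiodic.nat_mul_eq i.val

end Cyclic

/-- A representation of the double cyclic quiver on an arbitrary family of modules, with no relation
imposed. -/
structure DoubleRep (K : Type*) [CommRing K] {ℓ : ℕ} (V : ZMod ℓ → Type*)
    [∀ i, AddCommGroup (V i)] [∀ i, Module K (V i)] where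
  X : ∀ i, V (i + 1) →ₗ[K] V i
  Y : ∀ i, V i →ₗ[K] V (i + 1)

namespace DoubleRep

section CommRing

variable {K : Type*} [CommRing K] {ℓ : ℕ} {V W Z : ZMod ℓ → Type*}
  [∀ i, AddCommGroup (V i)] [∀ i, Module K (V i)] [∀ i, AddCommGroup (W i)] [∀ i, Module K (W i)]
  [∀ i, AddCommGroup (Z i)] [∀ i, Module K (Z i)]

/-- The component of the moment map at the vertex `i + 1`. -/
def momentMap (M : DoubleRep K V) (i : ZMod ℓ) : V (i + 1) →ₗ[K] V (i + 1) :=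
  M.X (i + 1) ∘ₗ M.Y (i + 1) - M.Y i ∘ₗ M.X i

/-- The relation defining `θ`-representations. -/
def IsThetaRep (M : DoubleRep K V) (θ : ZMod ℓ → K) : Prop :=
  ∀ i, M.momentMap i = θ (i + 1) • LinearMap.id

/-- Stability of a family of submodules: the submodules form a subrepresentation. -/
structure IsInvariant (M : DoubleRep K V) (U : ∀ i, Submodule K (V i)) : Prop where
  X_mem : ∀ i, ∀ v ∈ U (i + 1), M.X i v ∈ U i
  Y_mem : ∀ i, ∀ v ∈ U i, M.Y i v ∈ U (i + 1)

/-- Semisimplicity, in the form of complete reducibility. -/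
def IsSemisimple (M : DoubleRep K V) : Prop :=
  ∀ U, M.IsInvariant U → ∃ T, M.IsInvariant T ∧ ∀ i, IsCompl (U i) (T i)

/-- The subrepresentation carried by an invariant family of submodules. -/
def restrict (M : DoubleRep K V) {U : ∀ i, Submodule K (V i)} (hU : M.IsInvariant U) :
    DoubleRep K fun i => U i where
  X i := (M.X i).restrict (hU.X_mem i)
  Y i := (M.Y i).restrict (hU.Y_mem i)

/-- The linear map sending a family `f : V → W` to its failure to commute with the structure maps
of `M` and `N`. -/
def differential (M : DoubleRep K V) (N : DoubleRep K W) :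
    (∀ i, V i →ₗ[K] W i) →ₗ[K] ∀ i, (V (i + 1) →ₗ[K] W i) × (V i →ₗ[K] W (i + 1)) where
  toFun f i := (f i ∘ₗ M.X i - N.X i ∘ₗ f (i + 1), f (i + 1) ∘ₗ M.Y i - N.Y i ∘ₗ f i)
  map_add' f g := by ext i v <;> simp <;> abel
  map_smul' c f := by ext i v <;> simp [smul_sub]

/-- The space of morphisms from `M` to `N`. -/
def homs (M : DoubleRep K V) (N : DoubleRep K W) : Submodule K (∀ i, V i →ₗ[K] W i) :=
  LinearMap.ker (M.differential N)

/-- Existence of an isomorphism of representations. -/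
def Isomorphic (M : DoubleRep K V) (N : DoubleRep K W) : Prop :=
  ∃ φ : ∀ i, V i ≃ₗ[K] W i, (fun i => (φ i).toLinearMap) ∈ M.homs N

variable {M : DoubleRep K V} {N : DoubleRep K W} {L : DoubleRep K Z}

theorem mem_homs_iff {f : ∀ i, V i →ₗ[K] W i} :
    f ∈ M.homs N ↔ (∀ i v, f i (M.X i v) = N.X i (f (i + 1) v)) ∧
      ∀ i v, f (i + 1) (M.Y i v) = N.Y i (f i v) := by
  simp [homs, differential, funext_iff, Prod.ext_iff, sub_eq_zero, LinearMap.ext_iff, forall_and]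

theorem comp_mem_homs {g : ∀ i, W i →ₗ[K] Z i} {f : ∀ i, V i →ₗ[K] W i} (hg : g ∈ N.homs L)
    (hf : f ∈ M.homs N) : (fun i => g i ∘ₗ f i) ∈ M.homs L := by
  rw [mem_homs_iff] at *
  exact ⟨fun i v => by simp [hf.1, hg.1], fun i v => by simp [hf.2, hg.2]⟩

theorem subtype_mem_homs {U : ∀ i, Submodule K (V i)} (hU : M.IsInvariant U) :
    (fun i => (U i).subtype) ∈ (M.restrict hU).homs M :=
  mem_homs_iff.2 ⟨fun _ _ => rfl, fun _ _ => rfl⟩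

theorem projectionOnto_mem_homs {U T : ∀ i, Submodule K (V i)} (hU : M.IsInvariant U)
    (hT : M.IsInvariant T) (hUT : ∀ i, IsCompl (U i) (T i)) :
    (fun i => (U i).projectionOnto (T i) (hUT i)) ∈ M.homs (M.restrict hU) :=
  mem_homs_iff.2
    ⟨fun i => projectionOnto_apply_eq_restrict (M.X i) (hUT (i + 1)) (hUT i) (hU.X_mem i)
      (hT.X_mem i),
    fun i => projectionOnto_apply_eq_restrict (M.Y i) (hUT i) (hUT (i + 1)) (hU.Y_mem i)
      (hT.Y_mem i)⟩

theorem isInvariant_ker {f : ∀ i, V i →ₗ[K] W i} (hf : f ∈ M.homs N) :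
    M.IsInvariant fun i => LinearMap.ker (f i) := by
  rw [mem_homs_iff] at hf
  constructor <;> intro i v hv <;> rw [LinearMap.mem_ker] at hv ⊢
  · rw [hf.1, hv, map_zero]
  · rw [hf.2, hv, map_zero]

theorem isInvariant_range {f : ∀ i, V i →ₗ[K] W i} (hf : f ∈ M.homs N) :
    N.IsInvariant fun i => LinearMap.range (f i) := by
  rw [mem_homs_iff] at hf
  constructor <;> rintro i _ ⟨v, rfl⟩
  · exact ⟨_, hf.1 i v⟩
  · exact ⟨_, hf.2 i v⟩

theorem Isomorphic.symm (h : M.Isomorphic N) : N.Isomorphic M := by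
  obtain ⟨φ, hφ⟩ := h
  obtain ⟨hX, hY⟩ := mem_homs_iff.1 hφ
  refine ⟨fun i => (φ i).symm, mem_homs_iff.2 ⟨fun i w => ?_, fun i w => ?_⟩⟩
  · simpa [LinearEquiv.symm_apply_eq] using (hX i ((φ (i + 1)).symm w)).symm
  · simpa [LinearEquiv.symm_apply_eq] using (hY i ((φ i).symm w)).symm

theorem isomorphic_of_isomorphic_ker {f : ∀ i, V i →ₗ[K] W i} (hf : f ∈ M.homs N)
    {C : ∀ i, Submodule K (V i)} (hC : M.IsInvariant C)
    (hkerC : ∀ i, IsCompl (LinearMap.ker (f i)) (C i))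
    {D : ∀ i, Submodule K (W i)} (hD : N.IsInvariant D)
    (hrangeD : ∀ i, IsCompl (LinearMap.range (f i)) (D i))
    (h : (M.restrict (isInvariant_ker hf)).Isomorphic (N.restrict hD)) : M.Isomorphic N := by
  obtain ⟨φ, hφ⟩ := h
  have hproj := projectionOnto_mem_homs (isInvariant_ker hf) hC hkerC
  exact ⟨fun i => LinearEquiv.ofBijective _
      (bijective_comp_projectionOnto_ker_add (f i) (hkerC i) (hrangeD i) (φ i)),
    add_mem (comp_mem_homs (subtype_mem_homs hD) (comp_mem_homs hφ hproj)) hf⟩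

theorem IsThetaRep.restrict {θ : ZMod ℓ → K} (hM : M.IsThetaRep θ) {U : ∀ i, Submodule K (V i)}
    (hU : M.IsInvariant U) : (M.restrict hU).IsThetaRep θ :=
  fun i => LinearMap.ext fun v => Subtype.ext (LinearMap.congr_fun (hM i) v)

theorem IsSemisimple.restrict (hM : M.IsSemisimple) {U : ∀ i, Submodule K (V i)}
    (hU : M.IsInvariant U) : (M.restrict hU).IsSemisimple := by
  intro S hS
  have hmap : M.IsInvariant fun i => (S i).map (U i).subtype := by
    constructor <;> rintro i _ ⟨v, hv, rfl⟩
    · exact ⟨_, hS.X_mem i v hv, rfl⟩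
    · exact ⟨_, hS.Y_mem i v hv, rfl⟩
  obtain ⟨T, hT, hST⟩ := hM _ hmap
  refine ⟨fun i => (T i).comap (U i).subtype,
    ⟨fun i v hv => hT.X_mem i v hv, fun i v hv => hT.Y_mem i v hv⟩, fun i => ?_⟩
  have h := Submodule.isCompl_comap_subtype_of_isCompl_of_le (hST i) (Submodule.map_subtype_le _ _)
  rwa [Submodule.comap_map_eq_of_injective (U i).subtype_injective] at h

end CommRing

section Trace

variable {K : Type*} [CommRing K] {ℓ : ℕ} [NeZero ℓ] {V W : ZMod ℓ → Type*}
  [∀ i, AddCommGroup (V i)] [∀ i, Module K (V i)] [∀ i, AddCommGroup (W i)] [∀ i, Module K (W i)]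

variable (K V W) in
/-- The pairing between the targets of `N.differential M` and `M.differential N` obtained from the
trace; the sign makes the moment map appear in `arrowPairing_differential`. -/
noncomputable def arrowPairing :
    (∀ i, (W (i + 1) →ₗ[K] V i) × (W i →ₗ[K] V (i + 1))) →ₗ[K]
      Dual K (∀ i, (V (i + 1) →ₗ[K] W i) × (V i →ₗ[K] W (i + 1))) :=
  ∑ i, ((tracePairing K (V (i + 1)) (W i)).compl₁₂
        (LinearMap.snd K _ _ ∘ₗ LinearMap.proj i) (LinearMap.fst K _ _ ∘ₗ LinearMap.proj i) -
      (tracePairing K (V i) (W (i + 1))).compl₁₂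
        (LinearMap.fst K _ _ ∘ₗ LinearMap.proj i) (LinearMap.snd K _ _ ∘ₗ LinearMap.proj i))

theorem arrowPairing_apply (q : ∀ i, (W (i + 1) →ₗ[K] V i) × (W i →ₗ[K] V (i + 1)))
    (p : ∀ i, (V (i + 1) →ₗ[K] W i) × (V i →ₗ[K] W (i + 1))) :
    arrowPairing K V W q p = ∑ i, (LinearMap.trace K _ ((q i).2 ∘ₗ (p i).1) -
      LinearMap.trace K _ ((q i).1 ∘ₗ (p i).2)) := by
  simp [arrowPairing]

variable [∀ i, Module.Free K (V i)] [∀ i, Module.Finite K (V i)]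

theorem sum_trace_momentMap (M : DoubleRep K V) :
    ∑ i, LinearMap.trace K _ (M.momentMap i) = 0 := by
  simp only [momentMap, map_sub, Finset.sum_sub_distrib]
  rw [sum_comp_add_one fun i => LinearMap.trace K _ (M.X i ∘ₗ M.Y i), sub_eq_zero]
  exact Finset.sum_congr rfl fun i _ => LinearMap.trace_comp_comm' _ _

theorem IsThetaRep.sum_mul_finrank {θ : ZMod ℓ → K} {M : DoubleRep K V} (hM : M.IsThetaRep θ) :
    ∑ i, θ i * (finrank K (V i) : K) = 0 := by
  rw [← sum_comp_add_one, ← M.sum_trace_momentMap]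
  exact Finset.sum_congr rfl fun i _ => by rw [hM, map_smul, LinearMap.trace_id, smul_eq_mul]

theorem arrowPairing_differential (M : DoubleRep K V) (N : DoubleRep K W)
    (g : ∀ i, W i →ₗ[K] V i) (f : ∀ i, V i →ₗ[K] W i) :
    arrowPairing K V W (N.differential M g) (M.differential N f) =
      ∑ i, LinearMap.trace K _
        (g (i + 1) ∘ₗ (N.momentMap i ∘ₗ f (i + 1) - f (i + 1) ∘ₗ M.momentMap i)) := by
  let a (i : ZMod ℓ) : K := LinearMap.trace K _
    (g i ∘ₗ N.X i ∘ₗ N.Y i ∘ₗ f i - g i ∘ₗ f i ∘ₗ M.X i ∘ₗ M.Y i)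
  let b (i : ZMod ℓ) : K := LinearMap.trace K _
    (g (i + 1) ∘ₗ N.Y i ∘ₗ N.X i ∘ₗ f (i + 1) - g (i + 1) ∘ₗ f (i + 1) ∘ₗ M.Y i ∘ₗ M.X i)
  have hterm (i : ZMod ℓ) :
      LinearMap.trace K _ ((N.differential M g i).2 ∘ₗ (M.differential N f i).1) -
        LinearMap.trace K _ ((N.differential M g i).1 ∘ₗ (M.differential N f i).2) = a i - b i := by
    have h₁ := LinearMap.trace_comp_comm' (M.X i) (g (i + 1) ∘ₗ N.Y i ∘ₗ f i)
    have h₂ := LinearMap.trace_comp_comm' (g i ∘ₗ N.X i ∘ₗ f (i + 1)) (M.Y i)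
    have h₃ := LinearMap.trace_comp_comm' (g i ∘ₗ f i ∘ₗ M.X i) (M.Y i)
    have h₄ := LinearMap.trace_comp_comm' (M.X i) (g (i + 1) ∘ₗ f (i + 1) ∘ₗ M.Y i)
    simp only [LinearMap.comp_assoc] at h₁ h₂ h₃ h₄
    simp only [a, b, differential, LinearMap.coe_mk, AddHom.coe_mk, LinearMap.sub_comp,
      LinearMap.comp_sub, LinearMap.comp_assoc, map_sub]
    linear_combination h₁ + h₂ - h₃ - h₄
  calc arrowPairing K V W (N.differential M g) (M.differential N f)
      = ∑ i, (a i - b i) := by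
        rw [arrowPairing_apply]; exact Finset.sum_congr rfl fun i _ => hterm i
    _ = ∑ i, (a (i + 1) - b i) := by
        rw [Finset.sum_sub_distrib, Finset.sum_sub_distrib, sum_comp_add_one a]
    _ = _ := Finset.sum_congr rfl fun i _ => by
        simp only [a, b, momentMap, LinearMap.sub_comp, LinearMap.comp_sub, LinearMap.comp_assoc,
          map_sub]
        ring

theorem arrowPairing_differential_eq_zero {θ : ZMod ℓ → K} {M : DoubleRep K V} {N : DoubleRep K W}
    (hM : M.IsThetaRep θ) (hN : N.IsThetaRep θ) (g : ∀ i, W i →ₗ[K] V i)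
    (f : ∀ i, V i →ₗ[K] W i) :
    arrowPairing K V W (N.differential M g) (M.differential N f) = 0 := by
  rw [arrowPairing_differential]
  refine Finset.sum_eq_zero fun i _ => ?_
  rw [hM, hN, LinearMap.smul_comp, LinearMap.comp_smul, LinearMap.id_comp, LinearMap.comp_id,
    sub_self, LinearMap.comp_zero, map_zero]

end Trace

section Field

variable {K : Type*} [Field K] {ℓ : ℕ} [NeZero ℓ] {V W : ZMod ℓ → Type*}
  [∀ i, AddCommGroup (V i)] [∀ i, Module K (V i)] [∀ i, AddCommGroup (W i)] [∀ i, Module K (W i)]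

theorem arrowPairing_injective [∀ i, FiniteDimensional K (V i)] :
    Function.Injective (arrowPairing K V W) := by
  refine (injective_iff_map_eq_zero _).2 fun q hq => ?_
  have hpair (p : ∀ i, (V (i + 1) →ₗ[K] W i) × (V i →ₗ[K] W (i + 1))) :
      ∑ i, (LinearMap.trace K _ ((q i).2 ∘ₗ (p i).1) -
        LinearMap.trace K _ ((q i).1 ∘ₗ (p i).2)) = 0 := by
    rw [← arrowPairing_apply, hq, LinearMap.zero_apply]
  funext i
  refine Prod.ext (tracePairing_injective _ _ (LinearMap.ext fun f => ?_))
    (tracePairing_injective _ _ (LinearMap.ext fun f => ?_))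
  · have h := hpair (Pi.single i (0, f))
    rw [Fintype.sum_eq_single i fun j hj => by simp [Pi.single_eq_of_ne hj]] at h
    simpa using h
  · have h := hpair (Pi.single i (f, 0))
    rw [Fintype.sum_eq_single i fun j hj => by simp [Pi.single_eq_of_ne hj]] at h
    simpa using h

theorem finrank_range_differential_add_finrank_homs [∀ i, FiniteDimensional K (V i)]
    [∀ i, FiniteDimensional K (W i)] (M : DoubleRep K V) (N : DoubleRep K W) :
    finrank K (LinearMap.range (M.differential N)) + finrank K (M.homs N) =
      ∑ i, finrank K (V i) * finrank K (W i) := by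
  rw [homs, LinearMap.finrank_range_add_finrank_ker, finrank_pi_fintype]
  simp only [finrank_linearMap]

theorem two_mul_sum_finrank_mul_finrank_le [∀ i, FiniteDimensional K (V i)]
    [∀ i, FiniteDimensional K (W i)] {θ : ZMod ℓ → K} {M : DoubleRep K V} {N : DoubleRep K W}
    (hM : M.IsThetaRep θ) (hN : N.IsThetaRep θ) :
    2 * ∑ i, finrank K (V i) * finrank K (W i) ≤
      finrank K (M.homs N) + finrank K (N.homs M) +
        ∑ i, (finrank K (V (i + 1)) * finrank K (W i) +
          finrank K (V i) * finrank K (W (i + 1))) := by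
  have horth : finrank K (LinearMap.range (N.differential M)) +
      finrank K (LinearMap.range (M.differential N)) ≤
        finrank K (∀ i, (V (i + 1) →ₗ[K] W i) × (V i →ₗ[K] W (i + 1))) := by
    refine finrank_add_finrank_le_of_forall_apply_eq_zero arrowPairing_injective ?_
    rintro _ ⟨g, rfl⟩ _ ⟨f, rfl⟩
    exact arrowPairing_differential_eq_zero hM hN g f
  simp only [finrank_pi_fintype, finrank_prod, finrank_linearMap] at horth
  have hMN := M.finrank_range_differential_add_finrank_homs N
  have hNM := N.finrank_range_differential_add_finrank_homs M
  simp only [mul_comm (finrank K (W _))] at hNM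
  omega

theorem finrank_eq_zero_of_homs_eq_bot [CharZero K] [∀ i, FiniteDimensional K (V i)]
    [∀ i, FiniteDimensional K (W i)] {θ : ZMod ℓ → K} (hθ : ∑ i, θ i ≠ 0) {M : DoubleRep K V}
    {N : DoubleRep K W} (hM : M.IsThetaRep θ) (hN : N.IsThetaRep θ)
    (hdim : ∀ i, finrank K (V i) = finrank K (W i)) (hMN : M.homs N = ⊥) (hNM : N.homs M = ⊥)
    (i : ZMod ℓ) : finrank K (V i) = 0 := by
  have hform : ∑ i, (finrank K (V i) : ℤ) ^ 2 ≤
      ∑ i, (finrank K (V i) : ℤ) * finrank K (V (i + 1)) := by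
    have h := two_mul_sum_finrank_mul_finrank_le hM hN
    rw [hMN, hNM, finrank_bot, finrank_bot, zero_add, zero_add] at h
    simp only [← hdim, mul_comm (finrank K (V (_ + 1))),
      ← two_mul, ← Finset.mul_sum, ← sq] at h
    exact_mod_cast Nat.le_of_mul_le_mul_left h two_pos
  have hconst (i : ZMod ℓ) : finrank K (V i) = finrank K (V 0) :=
    mod_cast apply_eq_apply_zero_of_sum_sq_le hform i
  have htrace := hM.sum_mul_finrank
  simp only [hconst, ← Finset.sum_mul] at htrace
  rw [hconst]
  exact_mod_cast (mul_eq_zero.1 htrace).resolve_left hθ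

theorem exists_isInvariant_isomorphic_of_restrict [∀ i, FiniteDimensional K (V i)]
    [∀ i, FiniteDimensional K (W i)] {M : DoubleRep K V} {N : DoubleRep K W}
    (hM : M.IsSemisimple) (hN : N.IsSemisimple) (hdim : ∀ i, finrank K (V i) = finrank K (W i))
    (hMN : M.homs N ≠ ⊥) :
    ∃ (U : ∀ i, Submodule K (V i)) (T : ∀ i, Submodule K (W i)) (hU : M.IsInvariant U)
      (hT : N.IsInvariant T), (∀ i, finrank K (U i) = finrank K (T i)) ∧
      ∑ i, finrank K (U i) < ∑ i, finrank K (V i) ∧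
      ((M.restrict hU).Isomorphic (N.restrict hT) → M.Isomorphic N) := by
  obtain ⟨f, hf, hf0⟩ := Submodule.exists_mem_ne_zero_of_ne_bot hMN
  obtain ⟨C, hC, hkerC⟩ := hM _ (isInvariant_ker hf)
  obtain ⟨D, hD, hrangeD⟩ := hN _ (isInvariant_range hf)
  refine ⟨_, D, isInvariant_ker hf, hD, fun i => ?_, ?_,
    isomorphic_of_isomorphic_ker hf hC hkerC hD hrangeD⟩
  · have hV := (f i).finrank_range_add_finrank_ker
    have hW := Submodule.finrank_add_eq_of_isCompl (hrangeD i)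
    have := hdim i
    omega
  · obtain ⟨j, hj⟩ := Function.ne_iff.1 hf0
    exact Finset.sum_lt_sum (fun i _ => Submodule.finrank_le _)
      ⟨j, Finset.mem_univ j, Submodule.finrank_lt fun h => hj (LinearMap.ker_eq_top.1 h)⟩

end Field

end DoubleRep

/-- The `DoubleRep` underlying a `θ`-representation. -/
def Rep.toDoubleRep {ℓ : ℕ} {θ : ZMod ℓ → ℂ} {d : ZMod ℓ → ℕ} (R : Rep ℓ θ d) :
    DoubleRep ℂ fun i => Fin (d i) → ℂ where
  X := R.X
  Y := R.Y

theorem IsSemisimple.toDoubleRep {ℓ : ℕ} {θ : ZMod ℓ → ℂ} {d : ZMod ℓ → ℕ} {R : Rep ℓ θ d}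
    (hR : IsSemisimple R) : R.toDoubleRep.IsSemisimple := by
  intro U hU
  obtain ⟨T, hT⟩ := hR ⟨U, hU.X_mem, hU.Y_mem⟩
  exact ⟨T.U, ⟨T.hX, T.hY⟩, hT⟩

open DoubleRep in
theorem semisimple_unique_general {K : Type*} [Field K] [CharZero K] {ℓ : ℕ} [NeZero ℓ]
    {θ : ZMod ℓ → K} (hθ : ∑ i, θ i ≠ 0) {V W : ZMod ℓ → Type*}
    [∀ i, AddCommGroup (V i)] [∀ i, Module K (V i)] [∀ i, FiniteDimensional K (V i)]
    [∀ i, AddCommGroup (W i)] [∀ i, Module K (W i)] [∀ i, FiniteDimensional K (W i)]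
    {M : DoubleRep K V} {N : DoubleRep K W} (hM : M.IsThetaRep θ) (hN : N.IsThetaRep θ)
    (hMs : M.IsSemisimple) (hNs : N.IsSemisimple)
    (hdim : ∀ i, finrank K (V i) = finrank K (W i)) : M.Isomorphic N := by
  induction hn : ∑ i, finrank K (V i) using Nat.strong_induction_on generalizing V W with
  | _ n ih =>
    subst hn
    by_cases hMN : M.homs N = ⊥
    · by_cases hNM : N.homs M = ⊥
      · have hV := finrank_eq_zero_of_homs_eq_bot hθ hM hN hdim hMN hNM
        have (i : ZMod ℓ) : Subsingleton (W i) := finrank_zero_iff.1 ((hdim i).symm.trans (hV i))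
        exact ⟨fun i => LinearEquiv.ofFinrankEq _ _ (hdim i),
          mem_homs_iff.2 ⟨fun _ _ => Subsingleton.elim _ _, fun _ _ => Subsingleton.elim _ _⟩⟩
      · obtain ⟨T, U, hT, hU, hTU, hlt, hiso⟩ :=
          exists_isInvariant_isomorphic_of_restrict hNs hMs (fun i => (hdim i).symm) hNM
        simp only [hTU, ← hdim] at hlt
        exact (hiso (ih _ hlt (hM.restrict hU) (hN.restrict hT) (hMs.restrict hU) (hNs.restrict hT)
          (fun i => (hTU i).symm) rfl).symm).symm
    · obtain ⟨U, T, hU, hT, hUT, hlt, hiso⟩ :=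
        exists_isInvariant_isomorphic_of_restrict hMs hNs hdim hMN
      exact hiso (ih _ hlt (hM.restrict hU) (hN.restrict hT) (hMs.restrict hU) (hNs.restrict hT)
        hUT rfl)

/-- If `∑ θ_i ≠ 0`, any two semisimple `θ`-representations with the
same dimension vector are isomorphic. -/
theorem semisimple_unique (ℓ : ℕ) [NeZero ℓ] (θ : ZMod ℓ → ℂ)
    (ha : ∑ i : ZMod ℓ, θ i ≠ 0) (d : ZMod ℓ → ℕ) (R R' : Rep ℓ θ d)
    (hR : IsSemisimple R) (hR' : IsSemisimple R') : Isomorphic R R' := by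
  obtain ⟨φ, hφ⟩ := semisimple_unique_general ha (M := R.toDoubleRep) (N := R'.toDoubleRep)
    R.rel R'.rel hR.toDoubleRep hR'.toDoubleRep fun _ => rfl
  exact ⟨φ, DoubleRep.mem_homs_iff.1 hφ⟩

end CM
end

section
/- Let ℓ ≥ 2, J ⊆ ℤ/ℓℤ, and let θ ∈ ℂ^(ℤ/ℓℤ) be J-standard with Σ_{i ∈ ℤ/ℓℤ} θ_i ≠ 0. Then a vector d ∈ ℕ^(ℤ/ℓℤ) is the dimension vector of a simple θ-representation of the double cyclic quiver if and only if d = e_i for some i ∈ J, where e_i denotes the i-th standard basis vector of ℤ^(ℤ/ℓℤ). -/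
namespace CM

/-- The (non-linear) action of the simple reflection `s_j` on `ℤ^(ℤ/ℓℤ)`. -/
def sInt (ℓ : ℕ) (j : ZMod ℓ) (d : ZMod ℓ → ℤ) : ZMod ℓ → ℤ := fun i =>
  if i = j then (if j = 0 then 1 else 0) + d (j + 1) + d (j - 1) - d j else d i

/-- The linear action of the simple reflection `s_j` on `ℂ^(ℤ/ℓℤ)`.
For `i ≠ j` the coefficient of `θ j` is the number of arrows between `i` and `j`
(which is `2` when `ℓ = 2`). -/
def sC (ℓ : ℕ) (j : ZMod ℓ) (θ : ZMod ℓ → ℂ) : ZMod ℓ → ℂ := fun i =>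
  if i = j then -θ j
  else θ i + ((if i = j - 1 then 1 else 0) + (if i = j + 1 then 1 else 0) : ℂ) * θ j

lemma sC_sC (ℓ : ℕ) (j : ZMod ℓ) (θ : ZMod ℓ → ℂ) : sC ℓ j (sC ℓ j θ) = θ := by
  funext i
  by_cases h : i = j
  · subst h; simp [sC]
  · simp [sC, h]

/-- `s_j` as a bijection of `ℂ^(ℤ/ℓℤ)`. -/
def sPerm (ℓ : ℕ) (j : ZMod ℓ) : Equiv.Perm (ZMod ℓ → ℂ) :=
  ⟨sC ℓ j, sC ℓ j, fun θ => sC_sC ℓ j θ, fun θ => sC_sC ℓ j θ⟩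

/-- The group generated by the operators `s_j`, `j ∈ ℤ/ℓℤ`. -/
def Wgrp (ℓ : ℕ) : Subgroup (Equiv.Perm (ZMod ℓ → ℂ)) :=
  Subgroup.closure (Set.range (sPerm ℓ))

/-- The subgroup generated by the operators `s_j`, `j ∈ J`. -/
def WJ (ℓ : ℕ) (J : Set (ZMod ℓ)) : Subgroup (Equiv.Perm (ZMod ℓ → ℂ)) :=
  Subgroup.closure (sPerm ℓ '' J)

/-- `θ` is `J`-standard if its stabilizer in `W` is exactly `W_J`. -/
def JStandard (ℓ : ℕ) (J : Set (ZMod ℓ)) (θ : ZMod ℓ → ℂ) : Prop :=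
  ∀ w ∈ Wgrp ℓ, ((w : (ZMod ℓ → ℂ) → (ZMod ℓ → ℂ)) θ = θ ↔ w ∈ WJ ℓ J)

/-- A representation is simple if `d ≠ 0` and its only subrepresentations are `0` and itself. -/
def IsSimple {ℓ : ℕ} {θ : ZMod ℓ → ℂ} {d : ZMod ℓ → ℕ} (R : Rep ℓ θ d) : Prop :=
  (∃ i, d i ≠ 0) ∧ ∀ S : Subrep R, (∀ i, S.U i = ⊥) ∨ (∀ i, S.U i = ⊤)

/-!
By a trace argument the maps `Y` of a nonzero representation cannot all be injective when
`∑ θ i ≠ 0`, so there is a nonzero vector `w` at some vertex `b` killed by `Y`. On the string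
`w, X w, X² w, …` one has `Y X^(n+1) w = -α_n(θ) X^n w`, where
`α_n(θ) = θ b + θ (b - 1) + ⋯ + θ (b - n)`. The string is finite, so `α_n(θ) = 0` at its last
nonzero vector `X^n w`. As `∑ θ i ≠ 0`, this implies that `ℓ` does not divide `n + 1`, so the form
`α_n` is a real root, whose reflection fixes `θ` and hence lies in `W_J`; this forces the support
of `α_n` into `J`, where `θ` vanishes. Therefore `α_(n-1)(θ) = 0` too, so `X^n w`, at the vertex
`b - n`, is killed by both `X` and `Y` and spans a subrepresentation, which is everything by
simplicity.
-/

section RealRoots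

variable {ℓ : ℕ}

/-- The pairing of `φ` with the sum of the simple roots along the arc `i, i - 1, …, i - n + 1`;
the arc may wind around `ℤ/ℓℤ` several times. -/
def arcSum {M : Type*} [AddCommMonoid M] (φ : ZMod ℓ → M) (i : ZMod ℓ) (n : ℕ) : M :=
  ∑ m ∈ Finset.range n, φ (i - m)

section ArcSum

variable {M : Type*} [AddCommMonoid M] (φ : ZMod ℓ → M) (i : ZMod ℓ)

@[simp]
lemma arcSum_zero : arcSum φ i 0 = 0 := Finset.sum_range_zero _

lemma arcSum_succ (n : ℕ) : arcSum φ i (n + 1) = arcSum φ i n + φ (i - n) :=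
  Finset.sum_range_succ _ _

lemma arcSum_add (m n : ℕ) : arcSum φ i (m + n) = arcSum φ i m + arcSum φ (i - m) n := by
  simp only [arcSum, Finset.sum_range_add, Nat.cast_add, sub_sub]

lemma arcSum_self [NeZero ℓ] : arcSum φ i ℓ = ∑ j, φ j := by
  have sum_range_eq (f : ZMod ℓ → M) : ∑ m ∈ Finset.range ℓ, f m = ∑ j, f j := by
    obtain ⟨k, rfl⟩ := Nat.exists_eq_succ_of_ne_zero (NeZero.ne ℓ)
    rw [← Fin.sum_univ_eq_sum_range fun m => f m]
    exact Finset.sum_congr rfl fun j _ => congrArg f (ZMod.natCast_zmod_val (n := k + 1) j)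
  rw [arcSum, sum_range_eq fun j => φ (i - j)]
  exact (Equiv.subLeft i).sum_comp φ

lemma arcSum_mul_self [NeZero ℓ] (k : ℕ) : arcSum φ i (ℓ * k) = k • ∑ j, φ j := by
  induction k with
  | zero => rw [mul_zero, arcSum_zero, zero_smul]
  | succ k ih =>
    rw [Nat.mul_succ, arcSum_add, ih, arcSum_self, succ_nsmul]

lemma natCast_ne_zero_of_arcSum_eq_zero [NeZero ℓ] [IsAddTorsionFree M] {φ : ZMod ℓ → M}
    (hφ : ∑ j, φ j ≠ 0) {i : ZMod ℓ} {n : ℕ} (hn : n ≠ 0) (h : arcSum φ i n = 0) :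
    (n : ZMod ℓ) ≠ 0 := by
  rw [Ne, ZMod.natCast_eq_zero_iff]
  rintro ⟨k, rfl⟩
  rw [arcSum_mul_self, nsmul_eq_zero_iff_left hφ] at h
  exact hn (by rw [h, mul_zero])

end ArcSum

lemma sPerm_mem_Wgrp (j : ZMod ℓ) : sPerm ℓ j ∈ Wgrp ℓ :=
  Subgroup.subset_closure ⟨j, rfl⟩

lemma sC_apply_self (j : ZMod ℓ) (φ : ZMod ℓ → ℂ) : sC ℓ j φ j = -φ j := if_pos rfl

lemma sC_eq_self_iff {j : ZMod ℓ} {φ : ZMod ℓ → ℂ} : sC ℓ j φ = φ ↔ φ j = 0 := by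
  constructor
  · intro h
    have hj := congrFun h j
    rwa [sC_apply_self, neg_eq_self] at hj
  · intro h
    funext i
    by_cases hi : i = j
    · subst hi
      simp [sC, h]
    · simp [sC, hi, h]

lemma sC_apply [Nontrivial (ZMod ℓ)] (j : ZMod ℓ) (φ : ZMod ℓ → ℂ) (i : ZMod ℓ) :
    sC ℓ j φ i = φ i + ((if i = j - 1 then 1 else 0) + (if i = j + 1 then 1 else 0)
      - 2 * (if i = j then 1 else 0)) * φ j := by
  by_cases h : i = j
  · subst h
    have sub_ne : i ≠ i - 1 := by simp [eq_sub_iff_add_eq]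
    have add_ne : i ≠ i + 1 := by simp
    simp only [sC, if_true, if_neg sub_ne, if_neg add_ne]
    ring
  · simp [sC, h]

/-- Real roots, viewed as functions on `ℂ^(ℤ/ℓℤ)`: the `W`-translates of the simple roots, which
are the coordinate forms. -/
def IsRealRoot (α : (ZMod ℓ → ℂ) → ℂ) : Prop :=
  ∃ w ∈ Wgrp ℓ, ∃ j, ∀ φ, α φ = w φ j

lemma isRealRoot_eval (j : ZMod ℓ) : IsRealRoot fun φ => φ j :=
  ⟨1, one_mem _, j, fun _ => rfl⟩

lemma IsRealRoot.comp_sC {α : (ZMod ℓ → ℂ) → ℂ} (hα : IsRealRoot α) (j : ZMod ℓ) :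
    IsRealRoot fun φ => α (sC ℓ j φ) := by
  obtain ⟨w, hw, k, hwk⟩ := hα
  exact ⟨w * sPerm ℓ j, mul_mem hw (sPerm_mem_Wgrp j), k, fun φ => hwk _⟩

lemma IsRealRoot.exists_reflection {α : (ZMod ℓ → ℂ) → ℂ} (hα : IsRealRoot α) :
    ∃ s ∈ Wgrp ℓ, ∀ φ, s φ = φ ↔ α φ = 0 := by
  obtain ⟨w, hw, j, hwj⟩ := hα
  refine ⟨w⁻¹ * sPerm ℓ j * w, mul_mem (mul_mem (inv_mem hw) (sPerm_mem_Wgrp j)) hw, fun φ => ?_⟩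
  rw [hwj, ← sC_eq_self_iff, Equiv.Perm.mul_apply, Equiv.Perm.mul_apply, Equiv.Perm.inv_eq_iff_eq]
  rfl

lemma arcSum_sC [Nontrivial (ZMod ℓ)] (φ : ZMod ℓ → ℂ) (i : ZMod ℓ) (n : ℕ) :
    arcSum (sC ℓ i φ) (i - 1) n = arcSum φ i (n + 1) +
      ((if ((n + 1 : ℕ) : ZMod ℓ) = 0 then 1 else 0)
        - (if (n : ZMod ℓ) = 0 then 1 else 0)) * φ i := by
  induction n with
  | zero => simp [arcSum]
  | succ n ih =>
    have vertex_eq : i - 1 - (n : ZMod ℓ) = i - ((n + 1 : ℕ) : ZMod ℓ) := by push_cast; ring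
    have eq_pred : i - ((n + 1 : ℕ) : ZMod ℓ) = i - 1 ↔ (n : ZMod ℓ) = 0 := by
      rw [← vertex_eq, sub_eq_self]
    have eq_succ : i - ((n + 1 : ℕ) : ZMod ℓ) = i + 1 ↔ ((n + 1 + 1 : ℕ) : ZMod ℓ) = 0 := by
      rw [sub_eq_iff_eq_add, add_assoc, left_eq_add, Nat.cast_succ (n + 1), add_comm]
    rw [arcSum_succ, ih, arcSum_succ φ i (n + 1), sC_apply, vertex_eq]
    simp only [eq_pred, eq_succ, sub_eq_self]
    ring

/-- The reflection at the top vertex `i` of an arc shortens the arc by one vertex, or by two if it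
also ends at `i`. -/
lemma isRealRoot_arcSum [Nontrivial (ZMod ℓ)] {n : ℕ} (hn : (n : ZMod ℓ) ≠ 0) (i : ZMod ℓ) :
    IsRealRoot fun φ => arcSum φ i n := by
  induction n using Nat.strong_induction_on generalizing i with
  | _ n ih =>
  match n with
  | 0 => simp at hn
  | 1 => simpa [arcSum] using isRealRoot_eval i
  | n + 2 =>
    have arcSum_reflect (φ : ZMod ℓ → ℂ) := arcSum_sC φ i (n + 1)
    by_cases hn' : ((n + 1 : ℕ) : ZMod ℓ) = 0
    · have hn₀ : (n : ZMod ℓ) ≠ 0 := fun h => by simp [h] at hn'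
      have bottom_eq : i - 1 - (n : ZMod ℓ) = i := by
        rw [sub_sub, sub_eq_self, add_comm, ← Nat.cast_succ, hn']
      convert (ih n (by omega) hn₀ (i - 1)).comp_sC i using 2 with φ
      have h := arcSum_reflect φ
      rw [if_neg hn, if_pos hn', arcSum_succ, bottom_eq, sC_apply_self] at h
      linear_combination -h
    · convert (ih (n + 1) (by omega) hn' (i - 1)).comp_sC i using 2 with φ
      rw [arcSum_reflect, if_neg hn, if_neg hn', sub_zero, zero_mul, add_zero]

lemma apply_eq_self_of_mem_WJ {J : Set (ZMod ℓ)} {w : Equiv.Perm (ZMod ℓ → ℂ)} (hw : w ∈ WJ ℓ J)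
    {φ : ZMod ℓ → ℂ} (hφ : ∀ j ∈ J, φ j = 0) : w φ = φ := by
  have WJ_le : WJ ℓ J ≤ MulAction.stabilizer _ φ := by
    rw [WJ, Subgroup.closure_le]
    rintro _ ⟨j, hj, rfl⟩
    exact sC_eq_self_iff.2 (hφ j hj)
  exact WJ_le hw

section JStandard

variable {J : Set (ZMod ℓ)} {θ : ZMod ℓ → ℂ}

lemma JStandard.apply_eq_zero (hθ : JStandard ℓ J θ) {j : ZMod ℓ} (hj : j ∈ J) : θ j = 0 :=
  sC_eq_self_iff.1 <|
    (hθ (sPerm ℓ j) (sPerm_mem_Wgrp j)).2 (Subgroup.subset_closure ⟨j, hj, rfl⟩)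

lemma JStandard.realRoot_apply_eq_zero (hθ : JStandard ℓ J θ) {α : (ZMod ℓ → ℂ) → ℂ}
    (hα : IsRealRoot α) (hαθ : α θ = 0) {φ : ZMod ℓ → ℂ} (hφ : ∀ j ∈ J, φ j = 0) : α φ = 0 := by
  obtain ⟨s, hs, s_eq_iff⟩ := hα.exists_reflection
  have hsJ : s ∈ WJ ℓ J := (hθ s hs).1 ((s_eq_iff θ).2 hαθ)
  exact (s_eq_iff φ).1 (apply_eq_self_of_mem_WJ hsJ hφ)

lemma JStandard.sub_natCast_mem_of_arcSum_eq_zero [Nontrivial (ZMod ℓ)] (hθ : JStandard ℓ J θ)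
    {i : ZMod ℓ} {n : ℕ} (hn : (n : ZMod ℓ) ≠ 0) (h : arcSum θ i n = 0) {m : ℕ} (hm : m < n) :
    i - m ∈ J := by
  by_contra hmJ
  have arcSum_single : arcSum (Pi.single (i - (m : ZMod ℓ)) (1 : ℂ)) i n = 0 :=
    hθ.realRoot_apply_eq_zero (isRealRoot_arcSum hn i) h fun j hj =>
      Pi.single_eq_of_ne (ne_of_mem_of_not_mem hj hmJ) 1
  simp only [arcSum, Pi.single_apply, Finset.sum_boole, Nat.cast_eq_zero, Finset.card_eq_zero,
    Finset.filter_eq_empty_iff] at arcSum_single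
  exact arcSum_single (Finset.mem_range.2 hm) rfl

end JStandard

end RealRoots

lemma exists_eq_zero_of_apply_eq_smul {ι K V : Type*} [Infinite ι] [Field K] [AddCommGroup V]
    [Module K V] [FiniteDimensional K V] (f : Module.End K V) {c : ι → K}
    (hc : Function.Injective c) {v : ι → V} (hv : ∀ k, f (v k) = c k • v k) : ∃ k, v k = 0 := by
  by_contra! hne
  have hasEigenvalue (k : ι) : f.HasEigenvalue (c k) :=
    Module.End.hasEigenvalue_of_hasEigenvector
      (Module.End.hasEigenvector_iff.2 ⟨Module.End.mem_eigenspace_iff.2 (hv k), hne k⟩)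
  exact Set.infinite_range_of_injective hc <|
    f.finite_hasEigenvalue.subset (Set.range_subset_iff.2 hasEigenvalue)

lemma eq_of_le_add_one {ℓ : ℕ} [NeZero ℓ] {α : Type*} [PartialOrder α] {f : ZMod ℓ → α}
    (hf : ∀ i, f i ≤ f (i + 1)) (i j : ZMod ℓ) : f i = f j := by
  have le_add_natCast (i : ZMod ℓ) (k : ℕ) : f i ≤ f (i + k) := by
    induction k with
    | zero => simp
    | succ k ih =>
      rw [Nat.cast_succ, ← add_assoc]
      exact ih.trans (hf _)
  have le_any (i j : ZMod ℓ) : f i ≤ f j := by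
    simpa using le_add_natCast i (j - i).val
  exact (le_any i j).antisymm (le_any j i)

lemma eq_single_of_sum_eq_one {ι : Type*} [Fintype ι] [DecidableEq ι] {d : ι → ℕ}
    (hd : ∑ i, d i = 1) {j : ι} (hj : d j ≠ 0) : d = Pi.single j 1 := by
  rw [← Finset.add_sum_erase _ d (Finset.mem_univ j)] at hd
  have sum_erase : ∑ i ∈ Finset.univ.erase j, d i = 0 := by omega
  funext i
  by_cases hij : i = j
  · subst hij
    rw [Pi.single_eq_same]
    omega
  · rw [Pi.single_eq_of_ne hij]
    exact Finset.sum_eq_zero_iff.1 sum_erase i (by simp [hij])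

lemma subsingleton_fin_fun_of_eq_zero {α : Type*} {n : ℕ} (hn : n = 0) :
    Subsingleton (Fin n → α) := by
  subst hn
  infer_instance

section Total

variable {ℓ : ℕ}

/-- The total space `⨁ i, ℂ^(d i)` of a representation. -/
abbrev Total (d : ZMod ℓ → ℕ) : Type := ∀ i, Fin (d i) → ℂ

/-- The summand of the total space at the vertex `a`. -/
def homogeneous (d : ZMod ℓ → ℕ) (a : ZMod ℓ) : Submodule ℂ (Total d) :=
  LinearMap.range (LinearMap.single ℂ (fun i => Fin (d i) → ℂ) a)

namespace Rep

variable {θ : ZMod ℓ → ℂ} {d : ZMod ℓ → ℕ}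

/-- The representation with zero maps; the relations then force `θ` to vanish on the support
of `d`. -/
def zero (h : ∀ i, d i ≠ 0 → θ i = 0) : Rep ℓ θ d where
  X _ := 0
  Y _ := 0
  rel i := by
    by_cases hi : d (i + 1) = 0
    · have := subsingleton_fin_fun_of_eq_zero (α := ℂ) hi
      exact LinearMap.ext fun v => Subsingleton.elim _ _
    · simp [h _ hi]

variable [NeZero ℓ]

lemma sum_mul_dim_eq_zero (R : Rep ℓ θ d) : ∑ i, θ i * d i = 0 := by
  have trace_rel (i : ZMod ℓ) : θ (i + 1) * d (i + 1) =
      LinearMap.trace ℂ _ (R.X (i + 1) ∘ₗ R.Y (i + 1)) - LinearMap.trace ℂ _ (R.X i ∘ₗ R.Y i) := by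
    rw [LinearMap.trace_comp_comm' (R.Y i), ← map_sub, R.rel, map_smul, LinearMap.trace_id,
      Module.finrank_fin_fun, smul_eq_mul]
  rw [← Equiv.sum_comp (Equiv.addRight (1 : ZMod ℓ))]
  simp only [Equiv.coe_addRight, trace_rel, Finset.sum_sub_distrib]
  exact sub_eq_zero.2 (Equiv.sum_comp (Equiv.addRight (1 : ZMod ℓ))
    fun i => LinearMap.trace ℂ _ (R.X i ∘ₗ R.Y i))

variable (R : Rep ℓ θ d)

/-- The sum of the maps `X i`, as an endomorphism of the total space. -/
def totalX : Module.End ℂ (Total d) :=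
  ∑ i, LinearMap.single ℂ _ i ∘ₗ R.X i ∘ₗ LinearMap.proj (i + 1)

/-- The sum of the maps `Y i`, as an endomorphism of the total space. -/
def totalY : Module.End ℂ (Total d) :=
  ∑ i, LinearMap.single ℂ _ (i + 1) ∘ₗ R.Y i ∘ₗ LinearMap.proj i

lemma totalX_single (i : ZMod ℓ) (v : Fin (d (i + 1)) → ℂ) :
    R.totalX (Pi.single (i + 1) v) = Pi.single i (R.X i v) := by
  simp only [totalX, LinearMap.sum_apply, LinearMap.comp_apply, LinearMap.coe_single,
    LinearMap.proj_apply]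
  rw [Finset.sum_eq_single i (fun j _ hj => ?_) (by simp), Pi.single_eq_same]
  rw [Pi.single_eq_of_ne (by simpa using hj), map_zero, Pi.single_zero]

lemma totalY_single (i : ZMod ℓ) (v : Fin (d i) → ℂ) :
    R.totalY (Pi.single i v) = Pi.single (i + 1) (R.Y i v) := by
  simp only [totalY, LinearMap.sum_apply, LinearMap.comp_apply, LinearMap.coe_single,
    LinearMap.proj_apply]
  rw [Finset.sum_eq_single i (fun j _ hj => ?_) (by simp), Pi.single_eq_same]
  rw [Pi.single_eq_of_ne hj, map_zero, Pi.single_zero]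

lemma totalX_mem_homogeneous {a : ZMod ℓ} {w : Total d} (hw : w ∈ homogeneous d a) :
    R.totalX w ∈ homogeneous d (a - 1) := by
  obtain ⟨i, rfl⟩ : ∃ i, a = i + 1 := ⟨a - 1, (sub_add_cancel a 1).symm⟩
  obtain ⟨v, rfl⟩ := hw
  rw [add_sub_cancel_right]
  exact ⟨R.X i v, (R.totalX_single i v).symm⟩

lemma totalX_pow_mem_homogeneous {b : ZMod ℓ} {w : Total d} (hw : w ∈ homogeneous d b) (n : ℕ) :
    (R.totalX ^ n) w ∈ homogeneous d (b - n) := by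
  induction n with
  | zero => simpa using hw
  | succ n ih =>
    rw [pow_succ', Module.End.mul_apply, Nat.cast_succ, ← sub_sub]
    exact R.totalX_mem_homogeneous ih

lemma totalX_totalY_sub_totalY_totalX {a : ZMod ℓ} {w : Total d} (hw : w ∈ homogeneous d a) :
    R.totalX (R.totalY w) - R.totalY (R.totalX w) = θ a • w := by
  obtain ⟨i, rfl⟩ : ∃ i, a = i + 1 := ⟨a - 1, (sub_add_cancel a 1).symm⟩
  obtain ⟨v, rfl⟩ := hw
  have rel_apply : R.X (i + 1) (R.Y (i + 1) v) - R.Y i (R.X i v) = θ (i + 1) • v :=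
    LinearMap.congr_fun (R.rel i) v
  rw [LinearMap.coe_single, totalY_single, totalX_single, totalX_single, totalY_single,
    ← Pi.single_sub, rel_apply, Pi.single_smul]

lemma exists_not_injective_Y (hθ : ∑ i, θ i ≠ 0) (hd : ∃ i, d i ≠ 0) :
    ∃ i, ¬ Function.Injective (R.Y i) := by
  by_contra! hinj
  obtain ⟨a, ha⟩ := hd
  have dim_le (i : ZMod ℓ) : d i ≤ d (i + 1) := by
    simpa using LinearMap.finrank_le_finrank_of_injective (hinj i)
  have dim_eq (i : ZMod ℓ) : d i = d a := eq_of_le_add_one dim_le i a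
  have trace_eq : (∑ i, θ i) * d a = 0 := by
    simpa only [dim_eq, ← Finset.sum_mul] using R.sum_mul_dim_eq_zero
  exact mul_ne_zero hθ (Nat.cast_ne_zero.2 ha) trace_eq

lemma exists_homogeneous_totalY_eq_zero (hθ : ∑ i, θ i ≠ 0) (hd : ∃ i, d i ≠ 0) :
    ∃ b, ∃ w ∈ homogeneous d b, w ≠ 0 ∧ R.totalY w = 0 := by
  obtain ⟨b, hb⟩ := R.exists_not_injective_Y hθ hd
  obtain ⟨v, hv, hv₀⟩ : ∃ v, R.Y b v = 0 ∧ v ≠ 0 := by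
    simpa [injective_iff_map_eq_zero] using hb
  exact ⟨b, Pi.single b v, ⟨v, rfl⟩, by simpa using hv₀, by rw [totalY_single, hv, Pi.single_zero]⟩

section HighestWeight

variable {b : ZMod ℓ} {w : Total d}

lemma totalY_totalX_pow_succ (hw : w ∈ homogeneous d b) (hY : R.totalY w = 0) (n : ℕ) :
    R.totalY ((R.totalX ^ (n + 1)) w) = -arcSum θ b (n + 1) • (R.totalX ^ n) w := by
  induction n with
  | zero => simpa [hY, arcSum, neg_eq_iff_eq_neg] using R.totalX_totalY_sub_totalY_totalX hw
  | succ n ih =>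
    have comm := R.totalX_totalY_sub_totalY_totalX (R.totalX_pow_mem_homogeneous hw (n + 1))
    rw [ih, map_smul, ← Module.End.mul_apply R.totalX, ← Module.End.mul_apply R.totalX,
      ← pow_succ', ← pow_succ'] at comm
    rw [arcSum_succ, neg_add', sub_smul, ← comm, sub_sub_cancel]

lemma totalY_totalX_pow_eq_zero (hw : w ∈ homogeneous d b) (hY : R.totalY w = 0) {n : ℕ}
    (h : arcSum θ b n = 0) : R.totalY ((R.totalX ^ n) w) = 0 := by
  cases n with
  | zero => exact hY
  | succ n => rw [R.totalY_totalX_pow_succ hw hY, h, neg_zero, zero_smul]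

/-- Going `ℓ` steps down the string shifts the eigenvalue of `Y X` by the nonzero number `-∑ θ`,
so the string cannot be infinite. -/
lemma exists_totalX_pow_eq_zero (hw : w ∈ homogeneous d b) (hY : R.totalY w = 0)
    (hθ : ∑ i, θ i ≠ 0) : ∃ n, (R.totalX ^ n) w = 0 := by
  have eigen (k : ℕ) : (R.totalY * R.totalX) ((R.totalX ^ (ℓ * (k + 1) - 1)) w) =
      -((k + 1) • ∑ i, θ i) • (R.totalX ^ (ℓ * (k + 1) - 1)) w := by
    rw [Module.End.mul_apply, ← Module.End.mul_apply R.totalX, ← pow_succ',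
      R.totalY_totalX_pow_succ hw hY,
      Nat.sub_add_cancel (Nat.mul_pos (NeZero.pos ℓ) k.succ_pos), arcSum_mul_self]
  obtain ⟨k, hk⟩ := exists_eq_zero_of_apply_eq_smul _
    (fun p q hpq => by simpa [hθ] using hpq) eigen
  exact ⟨_, hk⟩

lemma exists_totalX_pow_ne_zero_and_arcSum_eq_zero (hw : w ∈ homogeneous d b)
    (hY : R.totalY w = 0) (hw₀ : w ≠ 0) (hθ : ∑ i, θ i ≠ 0) :
    ∃ n, (R.totalX ^ n) w ≠ 0 ∧ (R.totalX ^ (n + 1)) w = 0 ∧ arcSum θ b (n + 1) = 0 := by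
  obtain ⟨n, hn, hn'⟩ := Nat.exists_not_and_succ_of_not_zero_of_exists
    (p := fun n => (R.totalX ^ n) w = 0) hw₀ (R.exists_totalX_pow_eq_zero hw hY hθ)
  have h := R.totalY_totalX_pow_succ hw hY n
  rw [hn', map_zero] at h
  exact ⟨n, hn, hn', by simpa [hn] using h.symm⟩

end HighestWeight

/-- The subrepresentation of all homogeneous components lying in an invariant subspace of the total
space. -/
def subrepOfInvariant (M : Submodule ℂ (Total d)) (hMX : M ∈ R.totalX.invtSubmodule)
    (hMY : M ∈ R.totalY.invtSubmodule) : Subrep R where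
  U i := M.comap (LinearMap.single ℂ (fun i => Fin (d i) → ℂ) i)
  hX i v hv := by
    change Pi.single i (R.X i v) ∈ M
    rw [← totalX_single]
    exact hMX hv
  hY i v hv := by
    change Pi.single (i + 1) (R.Y i v) ∈ M
    rw [← totalY_single]
    exact hMY hv

end Rep

namespace IsSimple

variable {θ : ZMod ℓ → ℂ} {d : ZMod ℓ → ℕ} {R : Rep ℓ θ d}

lemma eq_top_of_mem_homogeneous [NeZero ℓ] (hR : IsSimple R) {M : Submodule ℂ (Total d)}
    (hX : M ∈ R.totalX.invtSubmodule) (hY : M ∈ R.totalY.invtSubmodule) {a : ZMod ℓ} {w : Total d}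
    (hw : w ∈ homogeneous d a) (hw₀ : w ≠ 0) (hwM : w ∈ M) : M = ⊤ := by
  obtain ⟨v, rfl⟩ := hw
  have hv : v ∈ (R.subrepOfInvariant M hX hY).U a := hwM
  rcases hR.2 (R.subrepOfInvariant M hX hY) with hbot | htop
  · rw [hbot a, Submodule.mem_bot] at hv
    simp [hv] at hw₀
  · rw [eq_top_iff, ← LinearMap.iSup_range_single ℂ fun i => Fin (d i) → ℂ]
    refine iSup_le fun i => ?_
    rintro _ ⟨u, rfl⟩
    have hu : u ∈ (R.subrepOfInvariant M hX hY).U i := htop i ▸ Submodule.mem_top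
    exact hu

lemma dim_eq_single [NeZero ℓ] (hR : IsSimple R) {a : ZMod ℓ} {w : Total d}
    (hw : w ∈ homogeneous d a) (hw₀ : w ≠ 0) (hX : R.totalX w = 0) (hY : R.totalY w = 0) :
    d = Pi.single a 1 := by
  have span_invariant {f : Module.End ℂ (Total d)} (hf : f w = 0) :
      Submodule.span ℂ {w} ∈ f.invtSubmodule := by
    simp [Module.End.mem_invtSubmodule, Submodule.span_le, hf]
  have span_eq_top : Submodule.span ℂ {w} = ⊤ :=
    hR.eq_top_of_mem_homogeneous (span_invariant hX) (span_invariant hY) hw hw₀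
      (Submodule.mem_span_singleton_self w)
  have sum_dim : ∑ i, d i = 1 := by
    rw [← finrank_span_singleton (K := ℂ) hw₀, span_eq_top, finrank_top]
    simp [Module.finrank_pi_fintype]
  refine eq_single_of_sum_eq_one sum_dim fun ha => ?_
  obtain ⟨v, rfl⟩ := hw
  have := subsingleton_fin_fun_of_eq_zero (α := ℂ) ha
  exact hw₀ (by rw [Subsingleton.elim v 0, map_zero])

end IsSimple

lemma isSimple_of_dim_eq_single {θ : ZMod ℓ → ℂ} {d : ZMod ℓ → ℕ} {a : ZMod ℓ}
    (hd : d = Pi.single a 1) (R : Rep ℓ θ d) : IsSimple R := by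
  have dim_top : d a = 1 := by rw [hd, Pi.single_eq_same]
  have : IsSimpleModule ℂ (Fin (d a) → ℂ) :=
    isSimpleModule_iff_finrank_eq_one.2 (by rw [Module.finrank_fin_fun, dim_top])
  have ext_at (S : Subrep R) {T : ∀ i, Submodule ℂ (Fin (d i) → ℂ)} (hT : S.U a = T a)
      (i : ZMod ℓ) : S.U i = T i := by
    by_cases hi : i = a
    · exact hi ▸ hT
    · have dim_zero : d i = 0 := by rw [hd, Pi.single_eq_of_ne hi]
      have := subsingleton_fin_fun_of_eq_zero (α := ℂ) dim_zero
      exact Subsingleton.elim _ _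
  exact ⟨⟨a, by simp [dim_top]⟩, fun S => (eq_bot_or_eq_top (S.U a)).imp
    (ext_at S (T := fun _ => ⊥)) (ext_at S (T := fun _ => ⊤))⟩

lemma exists_isSimple_of_apply_eq_zero {θ : ZMod ℓ → ℂ} {a : ZMod ℓ} (ha : θ a = 0) :
    ∃ R : Rep ℓ θ (Pi.single a 1), IsSimple R := by
  have theta_eq_zero (i : ZMod ℓ) (hi : Pi.single (M := fun _ => ℕ) a 1 i ≠ 0) : θ i = 0 := by
    obtain rfl : i = a := by_contra fun hia => hi (Pi.single_eq_of_ne hia 1)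
    exact ha
  exact ⟨.zero theta_eq_zero, isSimple_of_dim_eq_single rfl _⟩

end Total

/-- For `θ` `J`-standard with `∑ θ_i ≠ 0`, the dimension vectors of
simple `θ`-representations of the double cyclic quiver are exactly the standard basis
vectors `e_i` with `i ∈ J`. -/
theorem simple_dims_eq_basis (ℓ : ℕ) [NeZero ℓ] (hℓ : 2 ≤ ℓ) (J : Set (ZMod ℓ))
    (θ : ZMod ℓ → ℂ) (hst : JStandard ℓ J θ) (ha : ∑ i : ZMod ℓ, θ i ≠ 0)
    (d : ZMod ℓ → ℕ) :
    (∃ R : Rep ℓ θ d, IsSimple R) ↔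
      ∃ i ∈ J, d = fun i' => if i' = i then 1 else 0 := by
  have basis_eq (i : ZMod ℓ) : (fun j => if j = i then 1 else 0 : ZMod ℓ → ℕ) = Pi.single i 1 :=
    funext fun j => (Pi.single_apply i 1 j).symm
  simp only [basis_eq]
  constructor
  · rintro ⟨R, hR⟩
    have : Nontrivial (ZMod ℓ) := ZMod.nontrivial_iff.2 (by omega)
    obtain ⟨b, w, hw, hw₀, hY⟩ := R.exists_homogeneous_totalY_eq_zero ha hR.1
    obtain ⟨n, hn, hX, harc⟩ := R.exists_totalX_pow_ne_zero_and_arcSum_eq_zero hw hY hw₀ ha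
    have hn' : ((n + 1 : ℕ) : ZMod ℓ) ≠ 0 :=
      natCast_ne_zero_of_arcSum_eq_zero ha n.succ_ne_zero harc
    have bottom_mem : b - n ∈ J :=
      hst.sub_natCast_mem_of_arcSum_eq_zero hn' harc n.lt_succ_self
    have harc' : arcSum θ b n = 0 := by
      simpa [arcSum_succ, hst.apply_eq_zero bottom_mem] using harc
    exact ⟨b - n, bottom_mem, hR.dim_eq_single (R.totalX_pow_mem_homogeneous hw n) hn
      (by rwa [pow_succ'] at hX) (R.totalY_totalX_pow_eq_zero hw hY harc')⟩
  · rintro ⟨i, hi, rfl⟩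
    exact exists_isSimple_of_apply_eq_zero (hst.apply_eq_zero hi)

end CM
end
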